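/- arXiv:1911.03990 — 9 statements merged into one kernel-verified Lean document; each statement's English description precedes it below -/
import Mathlib

section
/- Tableau Lifting Theorem, even case: Let D ≥ 4 be even and m ≥ 2. Let d ≥ 1, let ρ = (ρ_1 ≥ … ≥ ρ_m ≥ 0) be a partition of d with at most m parts, and let λ be a partition of d·D with at most m rows. Let S be a regular tableau of shape λ with entries in {1,…,m} and content D·ρ (entry i occurs exactly D·ρ_i times). Set e_ρ := Σ_{i=1}^{m} ⌈ρ_i/(D−2)⌉ and δ := m·e_ρ + d. Then there exists a tableau T of shape λ + (m × (e_ρ·D)) with entries in {1,…,δ} in which every entry of {1,…,δ} appears exactly D times, such that: (1) for every map φ : {1,…,δ} → {1,…,m} for which φ(T) is regular, rightpart(φ(T)) lies in the S_m-orbit of S; (2) for every map φ : {1,…,δ} → {1,…,m} for which φ(T) is regular, leftpart(φ(T)) is duplex; (3) there exists a map φ : {1,…,δ} → {1,…,m} such that φ(T) is regular and rightpart(φ(T)) = S. -/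
open scoped BigOperators

/-- The `c`-th column of a tableau of shape `lam` (row lengths `lam r`),
read from top to bottom. -/
def tabCol {m : ℕ} {A : Type*} (lam : Fin m → ℕ) (T : (r : Fin m) → Fin (lam r) → A)
    (c : ℕ) : List A :=
  (List.finRange m).filterMap (fun r => if h : c < lam r then some (T r ⟨c, h⟩) else none)

/-- A tableau is regular if no column has a repeated entry. -/
def TabRegular {m : ℕ} {A : Type*} (lam : Fin m → ℕ)
    (T : (r : Fin m) → Fin (lam r) → A) : Prop :=
  ∀ c : ℕ, (tabCol lam T c).Nodup

/-- The number of columns of the shape `lam`. -/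
def tabWidth {m : ℕ} (lam : Fin m → ℕ) : ℕ := Finset.univ.sup lam

/-- A tableau is duplex if every column (as an ordered sequence of entries)
occurs an even number of times among its columns. -/
def TabDuplex {m : ℕ} {A : Type*} [DecidableEq A] (lam : Fin m → ℕ)
    (T : (r : Fin m) → Fin (lam r) → A) : Prop :=
  ∀ c < tabWidth lam,
    Even (((Finset.range (tabWidth lam)).filter
      (fun c' => tabCol lam T c' = tabCol lam T c)).card)

/-- The number of occurrences of the entry `a` in the tableau `T`. -/
def tabCount {m : ℕ} {A : Type*} [DecidableEq A] (lam : Fin m → ℕ)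
    (T : (r : Fin m) → Fin (lam r) → A) (a : A) : ℕ :=
  ∑ r : Fin m, ((Finset.univ : Finset (Fin (lam r))).filter (fun c => T r c = a)).card

/-- The leftmost `e` columns of a tableau of shape `(m × e) + lam`. -/
def tabLeft {m : ℕ} {A : Type*} (lam : Fin m → ℕ) (e : ℕ)
    (T : (r : Fin m) → Fin (e + lam r) → A) : (r : Fin m) → Fin e → A :=
  fun r c => T r (Fin.castLE (Nat.le_add_right e (lam r)) c)

/-- The shape-`lam` subtableau of a tableau of shape `(m × e) + lam` formed by the
columns after the leftmost `e` columns. -/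
def tabRight {m : ℕ} {A : Type*} (lam : Fin m → ℕ) (e : ℕ)
    (T : (r : Fin m) → Fin (e + lam r) → A) : (r : Fin m) → Fin (lam r) → A :=
  fun r c => T r ⟨e + c.1, Nat.add_lt_add_left c.isLt e⟩


lemma ext_equiv {α β : Type*} [Fintype α] [Fintype β] (s : Set α) (f : α → β)
    (hc : Fintype.card α = Fintype.card β) (hf : Set.InjOn f s) :
    ∃ g : α ≃ β, ∀ i ∈ s, g i = f i := by
  classical
  obtain ⟨g, hg⟩ := Set.MapsTo.exists_equiv_extend_of_card_eq (t := (Finset.univ : Finset β))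
    (by simpa using hc) (s := s) (f := f) (by intro x _; simp) hf
  exact ⟨g.trans (Equiv.subtypeUnivEquiv (by simp)), fun i hi => by simpa using hg i hi⟩

/-- parent block -/
def parB {m : ℕ} {k : Fin m → ℕ} (a : (i : Fin m) × Fin (k i)) (j : (i : Fin m) × Fin (k i)) :
    (i : Fin m) × Fin (k i) :=
  if j.2.1 = 0 then a else ⟨j.1, ⟨j.2.1 - 1, by have := j.2.2; omega⟩⟩

/-- seed assignment -/
def seedF {m D : ℕ} (hD : 4 ≤ D) {k ρ : Fin m → ℕ} (a : (i : Fin m) × Fin (k i)) (l : Fin m)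
    (p : ((i : Fin m) × Fin (k i)) × Fin D) :
    Option ((((i : Fin m) × Fin (k i)) ⊕ Fin (ρ l)) × Fin D) :=
  if p.1.1 = l then
    if p.2.1 = 0 then some (Sum.inl p.1, ⟨0, by omega⟩)
    else if p.2.1 = 1 then
      if p.1 = a then none else some (Sum.inl (parB a p.1), ⟨1, by omega⟩)
    else if h : p.1.2.1 * (D - 2) + (p.2.1 - 2) < ρ l then
      some (Sum.inr ⟨_, h⟩, ⟨0, by omega⟩)
    else none
  else if p.1 = a then none else some (Sum.inl p.1, p.2)

lemma sig_eq {m : ℕ} {k : Fin m → ℕ} {x y : (i : Fin m) × Fin (k i)} (h : x.1 = y.1)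
    (h2 : x.2.1 = y.2.1) : x = y := by
  obtain ⟨i, s⟩ := x
  obtain ⟨j, t⟩ := y
  simp only at h
  subst h
  simp only at h2
  have : s = t := Fin.ext h2
  rw [this]

lemma parB_inj {m : ℕ} {k : Fin m → ℕ} (a : (i : Fin m) × Fin (k i)) (ha : a.2.1 = 0)
    {x y : (i : Fin m) × Fin (k i)} (h : x.1 = y.1) (hx : x ≠ a) (hy : y ≠ a)
    (hp : parB a x = parB a y) : x = y := by
  unfold parB at hp
  split_ifs at hp with h1 h2 h2
  · exact sig_eq h (by omega)
  · exfalso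
    have e1 : a.1 = y.1 := by rw [hp]
    have : x.2.1 = a.2.1 := by omega
    exact hx (sig_eq (by rw [h, e1]) this)
  · exfalso
    have e1 : a.1 = x.1 := by rw [← hp]
    have : y.2.1 = a.2.1 := by omega
    exact hy (sig_eq (by rw [← h, e1]) this)
  · refine sig_eq h ?_
    have := congrArg (fun z => z.2.1) hp
    simp only at this
    omega

lemma parB_cases {m : ℕ} {k : Fin m → ℕ} (a : (i : Fin m) × Fin (k i))
    (x : (i : Fin m) × Fin (k i)) : parB a x = a ∨ (parB a x).1 = x.1 := by
  unfold parB
  split_ifs <;> simp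

lemma seed_inj {m D : ℕ} (hD : 4 ≤ D) {k ρ : Fin m → ℕ} (a : (i : Fin m) × Fin (k i))
    (ha : a.2.1 = 0) (l : Fin m)
    (p q : ((i : Fin m) × Fin (k i)) × Fin D) (b) (hp : seedF hD (ρ := ρ) a l p = some b)
    (hq : seedF hD (ρ := ρ) a l q = some b) : p = q := by
  obtain ⟨j, c⟩ := p
  obtain ⟨j', c'⟩ := q
  have hpc := parB_cases a j
  have hpc' := parB_cases a j'
  have key : j = j' ∧ c.1 = c'.1 := by
    unfold seedF at hp hq
    simp only at hp hq
    split_ifs at hp with h1 h2 h3 h4 h5 h6 <;> split_ifs at hq with h1' h2' h3' h4' h5' h6' <;>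
      (rw [← hp] at hq; simp only [Option.some.injEq, Prod.mk.injEq, Sum.inl.injEq, Sum.inr.injEq,
        reduceCtorEq, false_and, and_false, Fin.ext_iff] at hq)
    · exact ⟨hq.1.symm, by omega⟩
    · exact absurd (hq.1 ▸ h1) h1'
    · exact ⟨(parB_inj a ha (by rw [h1, h1']) h4 h4' hq.1.symm), by omega⟩
    · exfalso; rcases hpc with h | h
      · exact h6' (hq.1.trans h)
      · exact h1' (by rw [hq.1, h, h1])
    · have hc := c.2
      have hc' := c'.2
      have hq := hq.1
      have e1 : (c.1 - 2) < D - 2 := by omega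
      have e2 : (c'.1 - 2) < D - 2 := by omega
      have e3 : j'.2.1 = j.2.1 := by
        have := congrArg (· / (D - 2)) hq
        rwa [Nat.mul_comm, Nat.mul_comm j.2.1, Nat.mul_add_div (by omega), Nat.mul_add_div (by omega),
          Nat.div_eq_of_lt e1, Nat.div_eq_of_lt e2] at this
      rw [e3] at hq
      exact ⟨sig_eq (by rw [h1, h1']) e3.symm, by omega⟩
    · exact absurd (hq.1 ▸ h1') (by assumption)
    · exfalso
      rcases hpc' with h | h
      · simp_all
      · simp_all
    · exact ⟨hq.1.symm, hq.2.symm⟩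
  exact Prod.ext key.1 (Fin.ext key.2)

lemma class_equiv {m D : ℕ} (hD : 4 ≤ D) {k ρ : Fin m → ℕ} (a : (i : Fin m) × Fin (k i))
    (ha : a.2.1 = 0) (l : Fin m) (R : Type*) [Fintype R] (hR : Fintype.card R = D * ρ l) :
    ∃ E : ((((i : Fin m) × Fin (k i)) × Fin D) ⊕ R) ≃
        ((((i : Fin m) × Fin (k i)) ⊕ Fin (ρ l)) × Fin D),
      ∀ p b, seedF hD (ρ := ρ) a l p = some b → E (Sum.inl p) = b := by
  classical
  let f : ((((i : Fin m) × Fin (k i)) × Fin D) ⊕ R) →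
        ((((i : Fin m) × Fin (k i)) ⊕ Fin (ρ l)) × Fin D) := fun x =>
    match x with
    | Sum.inl p => (seedF hD (ρ := ρ) a l p).getD (Sum.inl a, ⟨0, by omega⟩)
    | Sum.inr _ => (Sum.inl a, ⟨0, by omega⟩)
  obtain ⟨g, hg⟩ := ext_equiv {x | ∃ p b, x = Sum.inl p ∧ seedF hD (ρ := ρ) a l p = some b} f
    (by simp [hR]; ring) (by
      rintro _ ⟨p, b, rfl, hp⟩ _ ⟨q, b', rfl, hq⟩ h
      simp only [f, hp, hq, Option.getD_some] at h
      subst h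
      rw [seed_inj hD a ha l p q b hp hq])
  refine ⟨g, fun p b h => ?_⟩
  rw [hg _ ⟨p, b, rfl, h⟩]
  simp [f, h]

lemma inj_agree {m : ℕ} (u v : Fin m → Fin m) (hu : Function.Injective u)
    (hv : Function.Injective v) (l : Fin m) (h : ∀ r, r ≠ l → u r = v r) : u l = v l := by
  obtain ⟨r, hr⟩ := (Finite.injective_iff_surjective.mp hv) (u l)
  by_cases hrl : r = l
  · rw [← hr, hrl]
  · rw [← h r hrl] at hr
    exact absurd (hu hr) hrl

/-- The forcing part of the construction. -/
lemma forcing {m D : ℕ} (hD : 4 ≤ D) {k ρ : Fin m → ℕ} (hk : ∀ l, ρ l ≤ k l * (D - 2))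
    (a : (i : Fin m) × Fin (k i)) (ha : a.2.1 = 0) (R : Fin m → Type*)
    (E : ∀ l, ((((i : Fin m) × Fin (k i)) × Fin D) ⊕ R l) ≃
        ((((i : Fin m) × Fin (k i)) ⊕ Fin (ρ l)) × Fin D))
    (hE : ∀ l p b, seedF hD (ρ := ρ) a l p = some b → E l (Sum.inl p) = b)
    (φ : ((l : Fin m) × (((i : Fin m) × Fin (k i)) ⊕ Fin (ρ l))) → Fin m)
    (hφ : ∀ p, Function.Injective (fun r => φ ⟨r, (E r (Sum.inl p)).1⟩)) :
    (∃ π : Equiv.Perm (Fin m), ∀ l (x : R l), φ ⟨l, (E l (Sum.inr x)).1⟩ = π l) ∧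
    (∀ r j c c', φ ⟨r, (E r (Sum.inl (j, c))).1⟩ = φ ⟨r, (E r (Sum.inl (j, c'))).1⟩) := by
  -- foreign blocks
  have hF : ∀ l j c, j.1 ≠ l → j ≠ a → E l (Sum.inl (j, c)) = (Sum.inl j, c) := by
    intro l j c h1 h2
    apply hE
    simp [seedF, h1, h2]
  have hO : ∀ j : (i : Fin m) × Fin (k i),
      E j.1 (Sum.inl (j, ⟨0, by omega⟩)) = (Sum.inl j, ⟨0, by omega⟩) := by
    intro j
    apply hE
    simp [seedF]
  have hP : ∀ j : (i : Fin m) × Fin (k i), j ≠ a →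
      E j.1 (Sum.inl (j, ⟨1, by omega⟩)) = (Sum.inl (parB a j), ⟨1, by omega⟩) := by
    intro j h
    apply hE
    simp [seedF, h]
  have hQ : ∀ l (q : Fin (ρ l)), ∃ (t : Fin (k l)) (c : Fin D),
      (E l (Sum.inl (⟨l, t⟩, c))).1 = Sum.inr q := by
    intro l q
    have h2 : 0 < D - 2 := by omega
    have hq : q.1 / (D - 2) < k l := by
      rw [Nat.div_lt_iff_lt_mul h2]
      exact lt_of_lt_of_le q.2 (hk l)
    have hmod := Nat.mod_lt q.1 h2
    have hdm := Nat.div_add_mod' q.1 (D - 2)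
    refine ⟨⟨q.1 / (D - 2), hq⟩, ⟨q.1 % (D - 2) + 2, by omega⟩, ?_⟩
    rw [hE l _ (Sum.inr q, ⟨0, by omega⟩)]
    have : q.1 / (D - 2) * (D - 2) + q.1 % (D - 2) < ρ l := by rw [hdm]; exact q.2
    simp [seedF, hdm]
  -- row `l` is constant in a non-anchor block of type `l`
  have hA : ∀ j : (i : Fin m) × Fin (k i), j ≠ a → ∀ c c',
      φ ⟨j.1, (E j.1 (Sum.inl (j, c))).1⟩ = φ ⟨j.1, (E j.1 (Sum.inl (j, c'))).1⟩ := by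
    intro j hj c c'
    refine inj_agree _ _ (hφ (j, c)) (hφ (j, c')) j.1 ?_
    intro r hr
    simp only [hF r j _ hr.symm hj]
  -- generic step: constancy on type l blocks gives constancy on the group
  have hG : ∀ l, (∀ (t : Fin (k l)) c c',
      φ ⟨l, (E l (Sum.inl (⟨l, t⟩, c))).1⟩ = φ ⟨l, (E l (Sum.inl (⟨l, t⟩, c'))).1⟩) →
      (∀ t : Fin (k l), φ ⟨l, Sum.inl ⟨l, t⟩⟩ = φ ⟨l, Sum.inl a⟩) ∧
      (∀ q : Fin (ρ l), φ ⟨l, Sum.inr q⟩ = φ ⟨l, Sum.inl a⟩) := by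
    intro l hc
    have h1 : ∀ n (hn : n < k l), φ ⟨l, Sum.inl ⟨l, ⟨n, hn⟩⟩⟩ = φ ⟨l, Sum.inl a⟩ := by
      intro n
      induction n with
      | zero =>
        intro hn
        by_cases h : (⟨l, ⟨0, hn⟩⟩ : (i : Fin m) × Fin (k i)) = a
        · rw [h]
        · have e := hc ⟨0, hn⟩ ⟨0, by omega⟩ ⟨1, by omega⟩
          rw [hO ⟨l, ⟨0, hn⟩⟩, hP ⟨l, ⟨0, hn⟩⟩ h] at e
          simpa [parB] using e
      | succ n ih =>
        intro hn
        have h : (⟨l, ⟨n + 1, hn⟩⟩ : (i : Fin m) × Fin (k i)) ≠ a := by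
          rintro rfl
          simp at ha
        have e := hc ⟨n + 1, hn⟩ ⟨0, by omega⟩ ⟨1, by omega⟩
        rw [hO ⟨l, ⟨n + 1, hn⟩⟩, hP ⟨l, ⟨n + 1, hn⟩⟩ h] at e
        rw [← ih (by omega)]
        simpa [parB] using e
    refine ⟨fun t => h1 t.1 t.2, fun q => ?_⟩
    obtain ⟨t, c, h⟩ := hQ l q
    have e := hc t c ⟨0, by omega⟩
    rw [hO ⟨l, t⟩, h] at e
    exact e.trans (h1 t.1 t.2)
  -- boxes outside foreign blocks
  have hB : ∀ l b, (∀ j c, b = Sum.inl (j, c) → j.1 = l ∨ j = a) →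
      (∀ t : Fin (k l), φ ⟨l, Sum.inl ⟨l, t⟩⟩ = φ ⟨l, Sum.inl a⟩) ∧
      (∀ q : Fin (ρ l), φ ⟨l, Sum.inr q⟩ = φ ⟨l, Sum.inl a⟩) →
      φ ⟨l, (E l b).1⟩ = φ ⟨l, Sum.inl a⟩ := by
    rintro l b hb ⟨h1, h2⟩
    rcases hs : E l b with ⟨s | q, c⟩
    · by_cases hsa : s = a
      · simp [hsa]
      by_cases hsl : s.1 = l
      · subst hsl
        exact h1 s.2
      · exfalso
        rw [← hF l s c hsl hsa] at hs
        rcases hb s c ((E l).injective hs) with h | h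
        · exact hsl h
        · exact hsa h
    · exact h2 q
  have hne : ∀ l, l ≠ a.1 → ∀ b, (∀ j c, b = Sum.inl (j, c) → j.1 = l ∨ j = a) →
      φ ⟨l, (E l b).1⟩ = φ ⟨l, Sum.inl a⟩ := by
    intro l hl b hb
    refine hB l b hb (hG l fun t c c' => hA ⟨l, t⟩ ?_ c c')
    rintro rfl
    exact hl rfl
  have hA' : ∀ j : (i : Fin m) × Fin (k i), ∀ c c',
      φ ⟨j.1, (E j.1 (Sum.inl (j, c))).1⟩ = φ ⟨j.1, (E j.1 (Sum.inl (j, c'))).1⟩ := by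
    intro j c c'
    by_cases hj : j = a
    · subst hj
      refine inj_agree _ _ (hφ (j, c)) (hφ (j, c')) j.1 ?_
      intro r hr
      rw [hne r hr, hne r hr]
      · rintro _ _ h; simp only [Sum.inl.injEq, Prod.mk.injEq] at h; exact Or.inr h.1.symm
      · rintro _ _ h; simp only [Sum.inl.injEq, Prod.mk.injEq] at h; exact Or.inr h.1.symm
    · exact hA j hj c c'
  have hall : ∀ l b, (∀ j c, b = Sum.inl (j, c) → j.1 = l ∨ j = a) →
      φ ⟨l, (E l b).1⟩ = φ ⟨l, Sum.inl a⟩ := fun l b hb =>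
    hB l b hb (hG l fun t c c' => hA' ⟨l, t⟩ c c')
  have hanch : ∀ l c, φ ⟨l, (E l (Sum.inl (a, c))).1⟩ = φ ⟨l, Sum.inl a⟩ := by
    intro l c
    apply hall
    rintro _ _ h; simp only [Sum.inl.injEq, Prod.mk.injEq] at h; exact Or.inr h.1.symm
  constructor
  · have hinj : Function.Injective (fun l => φ ⟨l, Sum.inl a⟩) := by
      have := hφ (a, ⟨0, by omega⟩)
      simpa only [hanch] using this
    refine ⟨Equiv.ofBijective _ (Finite.injective_iff_bijective.mp hinj), fun l x => ?_⟩
    rw [hall l (Sum.inr x) (by rintro _ _ h; cases h)]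
    rfl
  · intro r j c c'
    by_cases hj : j = a
    · subst hj
      rw [hanch, hanch]
    by_cases hr : j.1 = r
    · subst hr
      exact hA' j c c'
    · rw [hF r j c hr hj, hF r j c' hr hj]

lemma core {m D : ℕ} (hD : 4 ≤ D) {k ρ : Fin m → ℕ} (hk : ∀ l, ρ l ≤ k l * (D - 2))
    (a : (i : Fin m) × Fin (k i)) (ha : a.2.1 = 0) (R : Type*) [Fintype R] (cls : R → Fin m)
    (hR : ∀ l, Fintype.card {x : R // cls x = l} = D * ρ l) :
    ∃ (Tl : Fin m → (((i : Fin m) × Fin (k i)) × Fin D) →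
        ((l : Fin m) × (((i : Fin m) × Fin (k i)) ⊕ Fin (ρ l))))
      (Tr : R → ((l : Fin m) × (((i : Fin m) × Fin (k i)) ⊕ Fin (ρ l)))),
      (∀ r p, (Tl r p).1 = r) ∧ (∀ x, (Tr x).1 = cls x) ∧
      (∀ s, (∑ r, ∑ p, if Tl r p = s then 1 else 0) + (∑ x, if Tr x = s then 1 else 0) = D) ∧
      (∀ φ : ((l : Fin m) × (((i : Fin m) × Fin (k i)) ⊕ Fin (ρ l))) → Fin m,
        (∀ p, Function.Injective (fun r => φ (Tl r p))) →
        (∃ π : Equiv.Perm (Fin m), ∀ x, φ (Tr x) = π (cls x)) ∧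
        (∀ r j c c', φ (Tl r (j, c)) = φ (Tl r (j, c')))) := by
  classical
  choose E hE using fun l => class_equiv hD (ρ := ρ) a ha l {x : R // cls x = l} (hR l)
  refine ⟨fun r p => ⟨r, (E r (Sum.inl p)).1⟩, fun x => ⟨cls x, (E (cls x) (Sum.inr ⟨x, rfl⟩)).1⟩,
    fun _ _ => rfl, fun _ => rfl, ?_, ?_⟩
  · rintro ⟨l, s⟩
    have hcnt : (∑ b, if (E l b).1 = s then 1 else 0) = D := by
      rw [Equiv.sum_comp (E l) (fun b => if b.1 = s then 1 else 0), Fintype.sum_prod_type,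
        Finset.sum_eq_single s]
      · simp
      · intro b _ hb
        simp [hb]
      · simp
    rw [Fintype.sum_sum_type] at hcnt
    refine Eq.trans ?_ hcnt
    congr 1
    · rw [Finset.sum_eq_single l]
      · simp
      · intro r _ hr
        apply Finset.sum_eq_zero
        intro p _
        rw [if_neg]
        intro h
        exact hr (congrArg Sigma.fst h)
      · simp
    · have : ∀ x, (if (⟨cls x, (E (cls x) (Sum.inr ⟨x, rfl⟩)).1⟩ :
          ((l : Fin m) × (((i : Fin m) × Fin (k i)) ⊕ Fin (ρ l)))) = ⟨l, s⟩ then 1 else 0)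
          = if h : cls x = l then (if (E l (Sum.inr ⟨x, h⟩)).1 = s then 1 else 0) else 0 := by
        intro x
        by_cases h : cls x = l
        · subst h
          simp
        · rw [dif_neg h, if_neg]
          intro h'
          exact h (congrArg Sigma.fst h')
      rw [Finset.sum_congr rfl (fun x _ => this x)]
      rw [Finset.sum_dite]
      simp only [Finset.sum_const_zero, add_zero]
      refine Finset.sum_bij' (fun x _ => ⟨x.1, (Finset.mem_filter.mp x.2).2⟩)
        (fun x _ => ⟨x.1, Finset.mem_filter.mpr ⟨Finset.mem_univ _, x.2⟩⟩) ?_ ?_ ?_ ?_ ?_ <;> simp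
  · intro φ hφ
    obtain ⟨⟨π, h1⟩, h2⟩ := forcing hD hk a ha _ E hE φ hφ
    exact ⟨⟨π, fun x => h1 _ _⟩, h2⟩

lemma tabRegular_iff {m : ℕ} {A : Type*} (lam : Fin m → ℕ) (T : (r : Fin m) → Fin (lam r) → A) :
    TabRegular lam T ↔ ∀ (c : ℕ) (r r' : Fin m) (h : c < lam r) (h' : c < lam r'),
      T r ⟨c, h⟩ = T r' ⟨c, h'⟩ → r = r' := by
  unfold TabRegular tabCol
  refine forall_congr' fun c => ?_
  have hsym : Std.Symm (fun a a' : Fin m => ∀ b,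
      (if h : c < lam a then some (T a ⟨c, h⟩) else none) = some b →
      ∀ b', (if h : c < lam a' then some (T a' ⟨c, h⟩) else none) = some b' → b ≠ b') :=
    ⟨fun a a' h b hb b' hb' => (h b' hb' b hb).symm⟩
  rw [List.Nodup, List.pairwise_filterMap, ← List.Nodup.pairwise_coe (List.nodup_finRange m)]
  constructor
  · intro H r r' h h' e
    by_contra hne
    exact H (by simp) (by simp) hne (T r ⟨c, h⟩) (by simp [h]) (T r' ⟨c, h'⟩) (by simp [h']) e
  · intro H r _ r' _ hne b hb b' hb' e
    split_ifs at hb hb' with h h'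
    simp only [Option.some.injEq] at hb hb'
    exact hne (H r r' h h' (by rw [hb, hb', e]))

lemma ceil_bound (D : ℕ) (hD : 4 ≤ D) (n : ℕ) :
    n ≤ ⌈(n : ℚ) / ((D : ℚ) - 2)⌉₊ * (D - 2) := by
  have h := Nat.le_ceil ((n : ℚ) / ((D : ℚ) - 2))
  have h4 : (4 : ℚ) ≤ D := by exact_mod_cast hD
  rw [div_le_iff₀ (by linarith)] at h
  have : ((D - 2 : ℕ) : ℚ) = (D : ℚ) - 2 := by
    rw [Nat.cast_sub (by omega)]; norm_num
  rw [← this] at h ⊢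
  exact_mod_cast h

lemma even_card_blocks {J : Type*} [Fintype J] {N D : ℕ} (hD : Even D) (C : Fin N ≃ J × Fin D)
    (P : ℕ → Prop) [DecidablePred P]
    (hP : ∀ j c c', P (C.symm (j, c)).1 ↔ P (C.symm (j, c')).1) :
    Even ((Finset.range N).filter P).card := by
  classical
  rw [Finset.card_filter, Finset.sum_range,
    ← Equiv.sum_comp C.symm (fun i : Fin N => if P i.1 then 1 else 0), Fintype.sum_prod_type]
  refine Finset.even_sum _ fun j _ => ?_
  by_cases h : ∃ c, P (C.symm (j, c)).1
  · obtain ⟨c, hc⟩ := h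
    rw [Finset.sum_congr rfl (fun c' _ => if_pos ((hP j c c').mp hc))]
    simpa using hD
  · push Not at h
    rw [Finset.sum_congr rfl (fun c' _ => if_neg (h c'))]
    simp

/-- **Tableau Lifting Theorem, even case** (Theorem 13 of the paper, `D` even). -/
theorem tableau_lifting_even
    (D m d : ℕ) (hD : 4 ≤ D) (hDeven : Even D) (hm : 2 ≤ m) (hd : 1 ≤ d)
    (ρ : Fin m → ℕ) (hρmono : ∀ i j : Fin m, i ≤ j → ρ j ≤ ρ i)
    (hρsum : ∑ i, ρ i = d)
    (lam : Fin m → ℕ) (hlammono : ∀ i j : Fin m, i ≤ j → lam j ≤ lam i)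
    (hlamsum : ∑ r, lam r = d * D)
    (S : (r : Fin m) → Fin (lam r) → Fin m)
    (hSreg : TabRegular lam S)
    (hScont : ∀ i : Fin m, tabCount lam S i = D * ρ i)
    (eρ : ℕ) (heρ : eρ = ∑ i : Fin m, ⌈(ρ i : ℚ) / ((D : ℚ) - 2)⌉₊)
    (δ : ℕ) (hδ : δ = m * eρ + d) :
    ∃ T : (r : Fin m) → Fin (eρ * D + lam r) → Fin δ,
      (∀ a : Fin δ, tabCount (fun r => eρ * D + lam r) T a = D) ∧
      (∀ φ : Fin δ → Fin m,
          TabRegular (fun r => eρ * D + lam r) (fun r c => φ (T r c)) →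
          ∃ π : Equiv.Perm (Fin m),
            tabRight lam (eρ * D) (fun r c => φ (T r c)) = fun r c => π (S r c)) ∧
      (∀ φ : Fin δ → Fin m,
          TabRegular (fun r => eρ * D + lam r) (fun r c => φ (T r c)) →
          TabDuplex (fun _ : Fin m => eρ * D) (tabLeft lam (eρ * D) (fun r c => φ (T r c)))) ∧
      (∃ φ : Fin δ → Fin m,
          TabRegular (fun r => eρ * D + lam r) (fun r c => φ (T r c)) ∧
          tabRight lam (eρ * D) (fun r c => φ (T r c)) = S) := by
  classical
  obtain ⟨k, hkdef⟩ : ∃ k : Fin m → ℕ, k = fun i => ⌈(ρ i : ℚ) / ((D : ℚ) - 2)⌉₊ := ⟨_, rfl⟩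
  have hk : ∀ l, ρ l ≤ k l * (D - 2) := fun l => by rw [hkdef]; exact ceil_bound D hD (ρ l)
  have heρ' : eρ = ∑ i, k i := by rw [heρ, hkdef]
  clear heρ
  -- the anchor block
  obtain ⟨i0, hi0⟩ : ∃ i0, 0 < k i0 := by
    by_contra hcon
    push Not at hcon
    have : ∑ i, ρ i = 0 := Finset.sum_eq_zero fun i _ => by
      have h1 := hk i
      have h2 : k i = 0 := Nat.le_zero.mp (hcon i)
      rw [h2] at h1
      omega
    omega
  have hR : ∀ l, Fintype.card {x : (r : Fin m) × Fin (lam r) // S x.1 x.2 = l} = D * ρ l := by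
    intro l
    rw [← hScont l, Fintype.card_subtype, Finset.card_filter, Fintype.sum_sigma, tabCount]
    refine Finset.sum_congr rfl fun r _ => ?_
    rw [Finset.card_filter]
  obtain ⟨Tl, Tr, hTl, hTr, hcount, hforce⟩ := core hD hk ⟨i0, ⟨0, hi0⟩⟩ rfl
    ((r : Fin m) × Fin (lam r)) (fun x => S x.1 x.2) hR
  have C : Fin (eρ * D) ≃ ((i : Fin m) × Fin (k i)) × Fin D :=
    Fintype.equivOfCardEq (by simp [heρ'])
  have σ : ((l : Fin m) × (((i : Fin m) × Fin (k i)) ⊕ Fin (ρ l))) ≃ Fin δ :=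
    Fintype.equivOfCardEq (by
      simp [hδ, ← heρ', Finset.sum_add_distrib, hρsum])
  let T : (r : Fin m) → Fin (eρ * D + lam r) → Fin δ := fun r =>
    Fin.addCases (fun c => σ (Tl r (C c))) (fun c => σ (Tr ⟨r, c⟩))
  have hTL : ∀ r (c : ℕ) (h : c < eρ * D) (h' : c < eρ * D + lam r),
      T r ⟨c, h'⟩ = σ (Tl r (C ⟨c, h⟩)) := fun r c h h' =>
    Fin.addCases_left (motive := fun _ => Fin δ) (⟨c, h⟩ : Fin (eρ * D))
  have hTR : ∀ r (c : ℕ) (h : c < lam r) (h' : eρ * D + c < eρ * D + lam r),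
      T r ⟨eρ * D + c, h'⟩ = σ (Tr ⟨r, ⟨c, h⟩⟩) := fun r c h h' =>
    Fin.addCases_right (motive := fun _ => Fin δ) (⟨c, h⟩ : Fin (lam r))
  have hmain : ∀ φ : Fin δ → Fin m,
      TabRegular (fun r => eρ * D + lam r) (fun r c => φ (T r c)) →
      (∃ π : Equiv.Perm (Fin m), ∀ x, φ (σ (Tr x)) = π (S x.1 x.2)) ∧
        (∀ r j c c', φ (σ (Tl r (j, c))) = φ (σ (Tl r (j, c')))) := by
    intro φ hφ
    rw [tabRegular_iff] at hφ
    refine hforce (fun s => φ (σ s)) fun p r r' h => ?_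
    have hlt := (C.symm p).2
    refine hφ (C.symm p).1 r r' (by omega) (by omega) ?_
    rw [hTL r _ hlt, hTL r' _ hlt]
    simpa using h
  refine ⟨T, ?_, ?_, ?_, ?_⟩
  · intro s
    refine Eq.trans ?_ (hcount (σ.symm s))
    rw [tabCount, Fintype.sum_sigma, ← Finset.sum_add_distrib]
    refine Finset.sum_congr rfl fun r _ => ?_
    rw [Finset.card_filter, Fin.sum_univ_add,
      ← Equiv.sum_comp C (fun p => if Tl r p = σ.symm s then 1 else 0)]
    congr 1
    · refine Finset.sum_congr rfl fun c _ => ?_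
      simp only [T, Fin.addCases_left, Equiv.eq_symm_apply]
    · refine Finset.sum_congr rfl fun c _ => ?_
      simp only [T, Fin.addCases_right, Equiv.eq_symm_apply]
  · intro φ hφ
    obtain ⟨⟨π, hπ⟩, -⟩ := hmain φ hφ
    refine ⟨π, ?_⟩
    funext r c
    simp only [tabRight]
    rw [hTR r c.1 c.2]
    exact hπ ⟨r, c⟩
  · intro φ hφ
    obtain ⟨-, hcon⟩ := hmain φ hφ
    have hw : tabWidth (fun _ : Fin m => eρ * D) = eρ * D := by
      have : (Finset.univ : Finset (Fin m)).Nonempty := ⟨i0, by simp⟩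
      exact Finset.sup_const this _
    intro c0 _
    rw [hw]
    refine even_card_blocks hDeven C _ fun j c c' => ?_
    have : tabCol (fun _ : Fin m => eρ * D) (tabLeft lam (eρ * D) (fun r c => φ (T r c)))
          (C.symm (j, c)).1
        = tabCol (fun _ : Fin m => eρ * D) (tabLeft lam (eρ * D) (fun r c => φ (T r c)))
          (C.symm (j, c')).1 := by
      unfold tabCol
      congr 1
      funext r
      rw [dif_pos (C.symm (j, c)).2, dif_pos (C.symm (j, c')).2]
      congr 1
      have e := hcon r j c c'
      have e1 := hTL r _ (C.symm (j, c)).2 (by have := (C.symm (j, c)).2; omega)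
      have e2 := hTL r _ (C.symm (j, c')).2 (by have := (C.symm (j, c')).2; omega)
      simp only [Fin.eta, Equiv.apply_symm_apply] at e1 e2
      rw [← e1, ← e2] at e
      exact e
    rw [this]
  · refine ⟨fun s => (σ.symm s).1, ?_, ?_⟩
    · rw [tabRegular_iff]
      intro c r r' h h' e
      by_cases hc : c < eρ * D
      · rw [hTL r c hc, hTL r' c hc] at e
        simpa [hTl] using e
      · obtain ⟨c, rfl⟩ := Nat.exists_eq_add_of_le (not_lt.mp hc)
        rw [hTR r c (by omega), hTR r' c (by omega)] at e
        simp only [Equiv.symm_apply_apply, hTr] at e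
        exact (tabRegular_iff lam S).mp hSreg c r r' (by omega) (by omega) e
    · funext r c
      simp only [tabRight]
      rw [hTR r c.1 c.2]
      simp [hTr]
end

section
/- Tableau Lifting Theorem, odd case: Let D ≥ 3 be odd and m ≥ 2, and assume the binomial coefficient C(2(D−1), D−1) is at least 2(m−1). Let d ≥ 1, let ρ = (ρ_1 ≥ … ≥ ρ_m ≥ 0) be a partition of d with at most m parts, and let λ be a partition of d·D with at most m rows. Let S be a regular tableau of shape λ with entries in {1,…,m} and content D·ρ (entry i occurs exactly D·ρ_i times). Set e_ρ := Σ_{i=1}^{m} 2·⌈ρ_i/(2(D−2))⌉ and δ := m·e_ρ + d. Then there exists a tableau T of shape λ + (m × (e_ρ·D)) with entries in {1,…,δ} in which every entry of {1,…,δ} appears exactly D times, such that: (1) for every map φ : {1,…,δ} → {1,…,m} for which φ(T) is regular, rightpart(φ(T)) lies in the S_m-orbit of S; (2) for every map φ : {1,…,δ} → {1,…,m} for which φ(T) is regular, leftpart(φ(T)) is duplex; (3) there exists a map φ : {1,…,δ} → {1,…,m} such that φ(T) is regular and rightpart(φ(T)) = S. -/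
open scoped BigOperators

theorem tabCol_nodup_iff {m : ℕ} {A : Type*} (lam : Fin m → ℕ)
    (T : (r : Fin m) → Fin (lam r) → A) (c : ℕ) :
    (tabCol lam T c).Nodup ↔
      ∀ r r' (h : c < lam r) (h' : c < lam r'), T r ⟨c, h⟩ = T r' ⟨c, h'⟩ → r = r' := by
  unfold tabCol List.Nodup
  rw [List.pairwise_filterMap]
  constructor
  · intro hp r r' h h' heq
    by_contra hne
    have := List.Pairwise.forall_of_forall_of_flip (R := fun a a' : Fin m => a ≠ a' → ∀ b, (if h : c < lam a then some (T a ⟨c, h⟩) else none) = some b →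
        ∀ b', (if h : c < lam a' then some (T a' ⟨c, h⟩) else none) = some b' → b ≠ b')
      (l := List.finRange m) (by intro x _ hx; exact absurd rfl hx)
      (hp.imp (by intro a b hab _; exact hab))
      (hp.imp (by
        intro a b hab _ u hu v hv huv
        exact hab v hv u hu huv.symm))
    exact this (List.mem_finRange r) (List.mem_finRange r') hne _ (by simp [h]) _ (by simp [h']) heq
  · intro hp
    refine (List.nodup_finRange m).imp ?_
    intro a b hab u hu v hv huv
    split_ifs at hu hv with h1 h2
    apply hab
    apply hp a b h1 h2
    simp only [Option.some.injEq] at hu hv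
    rw [hu, hv, huv]

theorem tabCol_const {m n : ℕ} {A : Type*} (T : (r : Fin m) → Fin n → A) (c : ℕ) (h : c < n) :
    tabCol (fun _ => n) T c = (List.finRange m).map (fun r => T r ⟨c, h⟩) := by
  unfold tabCol
  simp [h]

theorem tabCol_const_eq {m n : ℕ} {A : Type*} (T : (r : Fin m) → Fin n → A) (c c' : ℕ)
    (h : c < n) (h' : c' < n) :
    tabCol (fun _ => n) T c' = tabCol (fun _ => n) T c ↔ ∀ r, T r ⟨c', h'⟩ = T r ⟨c, h⟩ := by
  rw [tabCol_const _ _ h, tabCol_const _ _ h']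
  simp

theorem reduce_abs {m D d e δ : ℕ} (hm : 2 ≤ m) (hD : 0 < D) (lam : Fin m → ℕ)
    (hlamsum : ∑ r, lam r = d * D)
    (S : (r : Fin m) → Fin (lam r) → Fin m) (hSreg : TabRegular lam S)
    (hδ : δ = m * e + d)
    {Lc E : Type} [Fintype Lc] [Fintype E] [DecidableEq Lc] [DecidableEq E]
    (hLc : Fintype.card Lc = e * D)
    (TL : Fin m → Lc → E) (TR : (r : Fin m) → Fin (lam r) → E)
    (hcount : ∀ a, (∑ r, (Finset.univ.filter (fun c => TL r c = a)).card) +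
      ∑ r, (Finset.univ.filter (fun c => TR r c = a)).card = D)
    (φ0 : E → Fin m) (h0L : ∀ r c, φ0 (TL r c) = r) (h0R : ∀ r c, φ0 (TR r c) = S r c)
    (hforce : ∀ φ : E → Fin m, (∀ c, Function.Injective (fun r => φ (TL r c))) →
      (∃ π : Equiv.Perm (Fin m), ∀ r c, φ (TR r c) = π (S r c)) ∧
      ∀ c, Even (Finset.univ.filter (fun c' => ∀ r, φ (TL r c') = φ (TL r c))).card) :
    ∃ T : (r : Fin m) → Fin (e * D + lam r) → Fin δ,
      (∀ a : Fin δ, tabCount (fun r => e * D + lam r) T a = D) ∧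
      (∀ φ : Fin δ → Fin m,
          TabRegular (fun r => e * D + lam r) (fun r c => φ (T r c)) →
          ∃ π : Equiv.Perm (Fin m),
            tabRight lam (e * D) (fun r c => φ (T r c)) = fun r c => π (S r c)) ∧
      (∀ φ : Fin δ → Fin m,
          TabRegular (fun r => e * D + lam r) (fun r c => φ (T r c)) →
          TabDuplex (fun _ : Fin m => e * D) (tabLeft lam (e * D) (fun r c => φ (T r c)))) ∧
      (∃ φ : Fin δ → Fin m,
          TabRegular (fun r => e * D + lam r) (fun r c => φ (T r c)) ∧
          tabRight lam (e * D) (fun r c => φ (T r c)) = S) := by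
  have hE : Fintype.card E = δ := by
    have h1 : ∑ a : E, ((∑ r, (Finset.univ.filter (fun c => TL r c = a)).card) +
      ∑ r, (Finset.univ.filter (fun c => TR r c = a)).card) = Fintype.card E * D := by
      simp [hcount]
    rw [Finset.sum_add_distrib, Finset.sum_comm] at h1
    rw [Finset.sum_comm (f := fun a r => (Finset.univ.filter (fun c => TR r c = a)).card)] at h1
    have h2 : ∀ r, ∑ a : E, (Finset.univ.filter (fun c => TL r c = a)).card = e * D := by
      intro r
      rw [← hLc, ← Finset.card_univ]
      exact (Finset.card_eq_sum_card_fiberwise (by simp)).symm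
    have h3 : ∀ r, ∑ a : E, (Finset.univ.filter (fun c => TR r c = a)).card = lam r := by
      intro r
      conv_rhs => rw [← Fintype.card_fin (lam r), ← Finset.card_univ]
      exact (Finset.card_eq_sum_card_fiberwise (by simp)).symm
    simp only [h2, h3, hlamsum] at h1
    simp only [Finset.sum_const, Finset.card_univ, Fintype.card_fin, smul_eq_mul] at h1
    apply Nat.eq_of_mul_eq_mul_right hD
    rw [← h1, hδ]; ring
  let εE : E ≃ Fin δ := Fintype.equivFinOfCardEq hE
  let εL : Lc ≃ Fin (e * D) := Fintype.equivFinOfCardEq hLc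
  let T : (r : Fin m) → Fin (e * D + lam r) → Fin δ := fun r c =>
    Fin.addCases (motive := fun _ => Fin δ) (fun c => εE (TL r (εL.symm c))) (fun c => εE (TR r c)) c
  have hTl : ∀ r c, T r (Fin.castAdd (lam r) c) = εE (TL r (εL.symm c)) := by
    intro r c; simp [T]
  have hTr : ∀ r c, T r (Fin.natAdd (e * D) c) = εE (TR r c) := by
    intro r c; simp [T]
  have hreg : ∀ φ : Fin δ → Fin m, TabRegular (fun r => e * D + lam r) (fun r c => φ (T r c)) →
      ∀ c, Function.Injective (fun r => (φ ∘ εE) (TL r c)) := by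
    intro φ hφ c r r' hrr
    have := (tabCol_nodup_iff _ _ _).1 (hφ (εL c).1) r r' (Nat.lt_add_right _ (εL c).2)
      (Nat.lt_add_right _ (εL c).2)
    apply this
    have h1 := hTl r (εL c)
    have h2 := hTl r' (εL c)
    simp only [Equiv.symm_apply_apply] at h1 h2
    change φ (T r (Fin.castAdd (lam r) (εL c))) = φ (T r' (Fin.castAdd (lam r') (εL c)))
    rw [h1, h2]; exact hrr
  refine ⟨T, ?_, ?_, ?_, ?_⟩
  · intro a
    refine Eq.trans ?_ (hcount (εE.symm a))
    rw [← Finset.sum_add_distrib]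
    unfold tabCount
    refine Finset.sum_congr rfl fun r _ => ?_
    rw [Finset.card_filter, Fin.sum_univ_add, Finset.card_filter, Finset.card_filter]
    congr 1
    · rw [← Equiv.sum_comp εL]
      refine Finset.sum_congr rfl fun c _ => ?_
      rw [hTl]
      simp [Equiv.eq_symm_apply]
    · refine Finset.sum_congr rfl fun c _ => ?_
      rw [hTr]
      simp [Equiv.eq_symm_apply]
  · intro φ hφ
    obtain ⟨⟨π, hπ⟩, -⟩ := hforce (φ ∘ εE) (hreg φ hφ)
    refine ⟨π, ?_⟩
    funext r c
    rw [← hπ]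
    exact congrArg φ (hTr r c)
  · intro φ hφ c hc
    obtain ⟨-, hev⟩ := hforce (φ ∘ εE) (hreg φ hφ)
    have hw : tabWidth (fun _ : Fin m => e * D) = e * D := by
      unfold tabWidth
      exact Finset.sup_const ⟨⟨0, by omega⟩, Finset.mem_univ _⟩ _
    rw [hw] at hc ⊢
    have := hev (εL.symm ⟨c, hc⟩)
    convert this using 1
    symm
    refine Finset.card_bij (fun c' _ => (εL c').1) ?_ ?_ ?_
    · intro c' hc'
      simp only [Finset.mem_filter, Finset.mem_univ, true_and, Finset.mem_range] at hc' ⊢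
      refine ⟨(εL c').2, ?_⟩
      rw [tabCol_const_eq _ _ _ hc (εL c').2]
      intro r
      have h1 := hTl r (εL c')
      have h2 := hTl r ⟨c, hc⟩
      change φ (T r (Fin.castAdd (lam r) (εL c'))) = φ (T r (Fin.castAdd (lam r) ⟨c, hc⟩))
      rw [h1, h2, Equiv.symm_apply_apply]
      exact hc' r
    · intro a _ b _ hab
      exact εL.injective (Fin.ext hab)
    · intro b hb
      simp only [Finset.mem_filter, Finset.mem_range] at hb
      refine ⟨εL.symm ⟨b, hb.1⟩, ?_, by simp⟩
      simp only [Finset.mem_filter, Finset.mem_univ, true_and]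
      intro r
      have := (tabCol_const_eq _ _ _ hc hb.1).1 hb.2 r
      change φ (T r (Fin.castAdd (lam r) ⟨b, hb.1⟩)) = φ (T r (Fin.castAdd (lam r) ⟨c, hc⟩)) at this
      rw [hTl, hTl] at this
      exact this
  · refine ⟨φ0 ∘ εE.symm, ?_, ?_⟩
    · intro c
      rw [tabCol_nodup_iff]
      intro r r' h h' heq
      by_cases hc : c < e * D
      · have h1 := hTl r ⟨c, hc⟩
        have h2 := hTl r' ⟨c, hc⟩
        change φ0 (εE.symm (T r (Fin.castAdd (lam r) ⟨c, hc⟩))) =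
          φ0 (εE.symm (T r' (Fin.castAdd (lam r') ⟨c, hc⟩))) at heq
        rw [h1, h2] at heq
        simpa [h0L] using heq
      · obtain ⟨c', rfl⟩ := Nat.exists_eq_add_of_le (not_lt.1 hc)
        have hh : c' < lam r := by simpa using h
        have hh' : c' < lam r' := by simpa using h'
        have h1 := hTr r ⟨c', hh⟩
        have h2 := hTr r' ⟨c', hh'⟩
        change φ0 (εE.symm (T r (Fin.natAdd (e * D) ⟨c', hh⟩))) =
          φ0 (εE.symm (T r' (Fin.natAdd (e * D) ⟨c', hh'⟩))) at heq
        rw [h1, h2] at heq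
        simp only [Equiv.symm_apply_apply, h0R] at heq
        exact (tabCol_nodup_iff _ _ _).1 (hSreg c') r r' hh hh' heq
    · funext r c
      have := hTr r c
      change φ0 (εE.symm (T r (Fin.natAdd (e * D) c))) = _
      rw [this]; simp [h0R]

theorem typed_extend {α β I : Type} [Fintype α] [Fintype β] [DecidableEq α] [DecidableEq β]
    [DecidableEq I] (tα : α → I) (tβ : β → I)
    (hcard : ∀ i, (Finset.univ.filter (fun a => tα a = i)).card =
      (Finset.univ.filter (fun b => tβ b = i)).card)
    (s : Finset α) (f : α → β) (hf : ∀ a ∈ s, tβ (f a) = tα a) (hinj : Set.InjOn f s) :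
    ∃ g : α ≃ β, (∀ a, tβ (g a) = tα a) ∧ ∀ a ∈ s, g a = f a := by
  have key : ∀ i, ∃ g : {a // tα a = i} ≃ (Finset.univ.filter (fun b => tβ b = i)),
      ∀ a, a.1 ∈ s → (g a : β) = f a.1 := by
    intro i
    obtain ⟨g, hg⟩ := Finset.exists_equiv_extend_of_card_eq (α := {a // tα a = i})
      (t := Finset.univ.filter (fun b => tβ b = i))
      (by rw [← hcard, Fintype.card_subtype])
      (s := Finset.univ.filter (fun a => a.1 ∈ s)) (f := fun a => f a.1)
      (by
        intro b hb
        simp only [Finset.mem_image, Finset.mem_filter, Finset.mem_univ, true_and] at hb ⊢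
        obtain ⟨a, ha, rfl⟩ := hb
        rw [hf _ ha, a.2])
      (by
        intro a ha b hb hab
        apply Subtype.ext
        exact hinj (by simpa using ha) (by simpa using hb) hab)
    exact ⟨g, fun a ha => hg a (by simpa using ha)⟩
  choose g hg using key
  have hty : ∀ i a, tβ (g i a : β) = i := by
    intro i a
    exact (Finset.mem_filter.1 (g i a).2).2
  let G : α → β := fun a => (g (tα a) ⟨a, rfl⟩ : β)
  have hG : ∀ i (a : {a // tα a = i}), G a.1 = g i a := by
    rintro i ⟨a, rfl⟩; rfl
  have hGt : ∀ a, tβ (G a) = tα a := fun a => hty _ _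
  have hGb : Function.Bijective G := by
    constructor
    · intro a b hab
      have ht : tα b = tα a := by rw [← hGt a, ← hGt b, hab]
      have h1 := hG (tα a) ⟨a, rfl⟩
      have h2 := hG (tα a) ⟨b, ht⟩
      simp only at h1 h2
      rw [h1, h2] at hab
      have := (g (tα a)).injective (Subtype.ext hab)
      exact congrArg Subtype.val this
    · intro b
      refine ⟨((g (tβ b)).symm ⟨b, by simp⟩).1, ?_⟩
      rw [hG]; simp
  exact ⟨Equiv.ofBijective G hGb, hGt, fun a ha => hg _ _ ha⟩

theorem chain_const {K X : Type} [DecidableEq K] (C : Finset K) (f : Equiv.Perm K)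
    (hf : f.IsCycleOn (C : Set K)) (k0 : K) (h0 : k0 ∈ C) (g : K → X)
    (hg : ∀ k ∈ C, k ≠ k0 → g (f k) = g k) : ∀ k ∈ C, g k = g k0 := by
  have key : ∀ n : ℕ, ∀ k ∈ C, (f ^ n) k = k0 → g k = g k0 := by
    intro n
    induction n with
    | zero => intro k _ h; simp at h; rw [h]
    | succ n ih =>
      intro k hk h
      by_cases hk0 : k = k0
      · rw [hk0]
      · rw [← hg k hk hk0]
        exact ih _ (hf.1.mapsTo hk) (by rw [pow_succ] at h; simpa using h)
  intro k hk
  obtain ⟨n, -, hn⟩ := hf.exists_pow_eq hk h0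
  exact key n k hk hn

theorem eq_of_agree_off {m : ℕ} (u v : Fin m → Fin m) (hu : Function.Injective u)
    (hv : Function.Injective v) (i : Fin m) (h : ∀ j, j ≠ i → u j = v j) : u = v := by
  have hvs := Finite.surjective_of_injective hv
  funext j
  by_cases hj : j = i
  · subst hj
    obtain ⟨l, hl⟩ := hvs (u j)
    by_cases hlj : l = j
    · rw [← hl, hlj]
    · exact absurd (hu (by rw [← hl, h l hlj])) hlj
  · exact h j hj

/-- forcing in one subblock -/
theorem force_block {m M : ℕ} (i : Fin m) (A : Fin m → Finset (Fin M)) (n : ℕ)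
    (hA : ∀ j, (A j).card = n) (hinj : ∀ j j', j ≠ i → j' ≠ i → A j = A j' → j = j')
    (u v : Fin m → Fin m) (x : Fin M → Fin m)
    (hmain : ∀ c, Function.Injective
      (fun r => if r = i then x c else if c ∈ A r then u r else v r))
    (hu : Function.Injective u) (hv : Function.Injective v) (huv : u i = v i) :
    u = v ∧ ∀ c, x c = u i := by
  have h1 : ∀ j, u j = v j := by
    intro j
    by_contra hne
    have hji : j ≠ i := fun h => hne (h ▸ huv)
    obtain ⟨l, hl⟩ := (Finite.surjective_of_injective hu) (v j)
    by_cases hli : l = i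
    · subst hli
      rw [huv] at hl
      exact hji (hv hl).symm
    by_cases hlj : l = j
    · exact hne (hlj ▸ hl)
    have hsub : A l ⊆ A j := by
      intro c hc
      by_contra hcj
      exact hlj (hmain c (by simp [hli, hji, hc, hcj, hl]))
    exact hlj (hinj _ _ hli hji (Finset.eq_of_subset_of_card_le hsub (by rw [hA, hA])))
  refine ⟨funext h1, fun c => ?_⟩
  have := eq_of_agree_off _ _ (hmain c) hu i (by
    intro j hj
    simp only [hj, if_false]
    split_ifs
    · rfl
    · exact (h1 j).symm)
  have := congrFun this i
  simpa using this

theorem exists_family {m D : ℕ} (hD : 3 ≤ D) 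
    (hbinom : 2 * (m - 1) ≤ Nat.choose (2 * (D - 1)) (D - 1)) (i : Fin m) :
    ∃ A : Fin m → Finset (Fin (2 * D - 3)), (∀ j, (A j).card = D - 2) ∧
      ∀ j j', j ≠ i → j' ≠ i → A j = A j' → j = j' := by
  have h2 : m - 1 ≤ Nat.choose (2 * D - 3) (D - 2) := by
    obtain ⟨t, rfl⟩ : ∃ t, D = t + 2 := ⟨D - 2, by omega⟩
    have e1 : 2 * (t + 2 - 1) = (2 * t + 1) + 1 := by omega
    have e2 : t + 2 - 1 = t + 1 := by omega
    have e3 : 2 * (t + 2) - 3 = 2 * t + 1 := by omega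
    rw [e1, e2, Nat.choose_succ_succ] at hbinom
    have : (2 * t + 1).choose (t + 1) = (2 * t + 1).choose t := by
      apply Nat.choose_symm_of_eq_add; omega
    simp only [Nat.succ_eq_add_one] at hbinom
    rw [e3]
    simp only [Nat.add_sub_cancel]
    omega
  have hle : Fintype.card {j : Fin m // j ≠ i} ≤
      Fintype.card (Finset.powersetCard (D - 2) (Finset.univ : Finset (Fin (2 * D - 3)))) := by
    simp only [Fintype.card_coe, Finset.card_powersetCard, Finset.card_univ, Fintype.card_fin]
    rw [Fintype.card_subtype_compl]
    simpa using h2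
  obtain ⟨g⟩ := Function.Embedding.nonempty_of_card_le hle
  obtain ⟨B0, hB0⟩ : ∃ B : Finset (Fin (2 * D - 3)), B.card = D - 2 := by
    obtain ⟨B, -, hB⟩ := Finset.exists_subset_card_eq
      (s := (Finset.univ : Finset (Fin (2 * D - 3)))) (n := D - 2) (by simp; omega)
    exact ⟨B, hB⟩
  refine ⟨fun j => if h : j ≠ i then (g ⟨j, h⟩ : Finset (Fin (2 * D - 3))) else B0, ?_, ?_⟩
  · intro j
    beta_reduce
    by_cases h : j ≠ i
    · rw [dif_pos h]
      exact (Finset.mem_powersetCard.1 (g ⟨j, h⟩).2).2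
    · rw [dif_neg h, hB0]
  · intro j j' hj hj' h
    simp only [hj, hj', dite_true, ne_eq, not_false_eq_true] at h
    have := g.injective (Subtype.ext h)
    exact congrArg Subtype.val this

theorem exists_W {K P I : Type} [Fintype K] [Fintype P] [DecidableEq K] [DecidableEq P]
    [DecidableEq I] (ty : K → I) (n : I → ℕ)
    (h : ∀ i, n i ≤ (Finset.univ.filter (fun k => ty k = i)).card * Fintype.card P) :
    ∃ W : Finset (K × P), ∀ i, (W.filter (fun w => ty w.1 = i)).card = n i := by
  have hc : ∀ i, (Finset.univ.filter (fun w : K × P => ty w.1 = i)).card =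
      (Finset.univ.filter (fun k => ty k = i)).card * Fintype.card P := by
    intro i
    rw [← Finset.card_univ, ← Finset.card_product]
    congr 1
    ext w; simp
  have : ∀ i, ∃ s ⊆ Finset.univ.filter (fun w : K × P => ty w.1 = i), s.card = n i :=
    fun i => Finset.exists_subset_card_eq (by rw [hc]; exact h i)
  choose s hs hn using this
  refine ⟨Finset.univ.filter (fun w => w ∈ s (ty w.1)), fun i => ?_⟩
  rw [← hn i]
  congr 1
  ext w
  simp only [Finset.mem_filter, Finset.mem_univ, true_and]
  constructor
  · rintro ⟨h1, rfl⟩; exact h1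
  · intro h1
    have := hs i h1
    simp only [Finset.mem_filter, Finset.mem_univ, true_and] at this
    subst this
    exact ⟨h1, rfl⟩

theorem exists_F {K R I : Type} {D : ℕ} (hD : 3 ≤ D) [Fintype K] [Fintype R] [DecidableEq K]
    [DecidableEq R] [DecidableEq I] (ty : K → I) (tR : R → I) (ρ : I → ℕ) (k0 : K)
    (hR : ∀ i, (Finset.univ.filter (fun b => tR b = i)).card = D * ρ i)
    (W : Finset (K × Fin (2 * D - 3)))
    (hW : ∀ i, (W.filter (fun w => ty w.1 = i)).card =
      (Finset.univ.filter (fun k => ty k = i)).card + ρ i) :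
    ∃ F : (K × (Fin (2 * D - 3) ⊕ Fin 3)) ⊕ R → K ⊕ W,
      (∀ b, Sum.elim ty (fun w : W => ty w.1.1) (F b) = Sum.elim (fun kc => ty kc.1) tR b) ∧
      (∀ k t, F (Sum.inl (k, Sum.inr t)) = Sum.inl k) ∧
      (∀ w : W, F (Sum.inl (w.1.1, Sum.inl w.1.2)) = Sum.inr w) ∧
      ∀ x, (Finset.univ.filter (fun b => F b = x)).card = D := by
  let tX : K ⊕ W → I := Sum.elim ty (fun w : W => ty w.1.1)
  let tB : (K × (Fin (2 * D - 3) ⊕ Fin 3)) ⊕ R → I := Sum.elim (fun kc => ty kc.1) tR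
  have hD0 : 0 < D := by omega
  let f : (K × (Fin (2 * D - 3) ⊕ Fin 3)) ⊕ R → (K ⊕ W) × Fin D := fun b =>
    match b with
    | Sum.inl (k, Sum.inl c) =>
      if h : (k, c) ∈ W then (Sum.inr ⟨(k, c), h⟩, ⟨0, hD0⟩) else (Sum.inl k, ⟨0, hD0⟩)
    | Sum.inl (k, Sum.inr t) => (Sum.inl k, ⟨t.1, by omega⟩)
    | Sum.inr _ => (Sum.inl k0, ⟨0, hD0⟩)
  let P : (K × (Fin (2 * D - 3) ⊕ Fin 3)) ⊕ R → Prop := fun b =>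
    match b with
    | Sum.inl (k, Sum.inl c) => (k, c) ∈ W
    | Sum.inl (_, Sum.inr _) => True
    | Sum.inr _ => False
  classical
  obtain ⟨g, hg1, hg2⟩ := typed_extend tB (fun x : (K ⊕ W) × Fin D => tX x.1) (by
    intro i
    have e1 : (Finset.univ.filter (fun b => tB b = i)).card =
        (Finset.univ.filter (fun k => ty k = i)).card * (2 * D) + D * ρ i := by
      rw [Finset.card_filter, Fintype.sum_sum_type, ← hR i, Finset.card_filter (fun b => tR b = i)]
      congr 1
      rw [Fintype.sum_prod_type]
      have hx : ∀ x, (∑ y : Fin (2 * D - 3) ⊕ Fin 3, if tB (Sum.inl (x, y)) = i then 1 else 0) =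
          (if ty x = i then 1 else 0) * (2 * D) := by
        intro x
        by_cases h : ty x = i
        · simp [tB, h]; omega
        · simp [tB, h]
      simp only [hx]
      rw [← Finset.sum_mul, Finset.card_filter]
    have e2 : (Finset.univ.filter (fun x : (K ⊕ W) × Fin D => tX x.1 = i)).card =
        ((Finset.univ.filter (fun k => ty k = i)).card +
          (W.filter (fun w => ty w.1 = i)).card) * D := by
      rw [Finset.card_filter, Fintype.sum_prod_type]
      have hx : ∀ x : K ⊕ W, (∑ y : Fin D, if tX (x, y).1 = i then 1 else 0) =
          (if tX x = i then 1 else 0) * D := by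
        intro x
        by_cases h : tX x = i <;> simp [h]
      simp only [hx]
      rw [← Finset.sum_mul, Fintype.sum_sum_type]
      congr 2
      · rw [Finset.card_filter]; rfl
      · rw [Finset.card_filter]
        exact Finset.sum_coe_sort W (fun w => if ty w.1 = i then 1 else 0)
    rw [e1, e2, hW]; ring) (Finset.univ.filter P) f (by
    intro b hb
    simp only [Finset.mem_filter, Finset.mem_univ, true_and] at hb
    match b, hb with
    | Sum.inl (k, Sum.inl c), hb =>
      have hb : (k, c) ∈ W := hb
      simp [f, tX, tB, hb]
    | Sum.inl (k, Sum.inr t), _ => simp [f, tX, tB]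
    | Sum.inr _, hb => exact hb.elim) (by
    intro b hb b' hb' h
    simp only [Finset.coe_filter, Finset.mem_univ, true_and, Set.mem_ofPred_eq] at hb hb'
    match b, hb, b', hb', h with
    | Sum.inl (k, Sum.inl c), hb, Sum.inl (k', Sum.inl c'), hb', h =>
      have hb : (k, c) ∈ W := hb
      have hb' : (k', c') ∈ W := hb'
      simp [f, hb, hb'] at h
      simp [h]
    | Sum.inl (k, Sum.inl c), hb, Sum.inl (k', Sum.inr c'), hb', h =>
      have hb : (k, c) ∈ W := hb
      simp [f, hb] at h
    | Sum.inl (k, Sum.inr c), hb, Sum.inl (k', Sum.inl c'), hb', h =>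
      have hb' : (k', c') ∈ W := hb'
      simp [f, hb'] at h
    | Sum.inl (k, Sum.inr c), hb, Sum.inl (k', Sum.inr c'), hb', h =>
      simp [f] at h
      simp [h.1, Fin.ext_iff, h.2]
    | Sum.inr _, hb, _, _, _ => exact hb.elim
    | _, _, Sum.inr _, hb', _ => exact hb'.elim)
  refine ⟨fun b => (g b).1, hg1, ?_, ?_, ?_⟩
  · intro k t
    have := hg2 (Sum.inl (k, Sum.inr t)) (by simp [P])
    simp [this, f]
  · intro w
    have := hg2 (Sum.inl (w.1.1, Sum.inl w.1.2)) (by simp [P])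
    simp [this, f]
  · intro x
    have : (Finset.univ.filter (fun b => (g b).1 = x)).card =
        (Finset.univ.filter (fun y : (K ⊕ W) × Fin D => y.1 = x)).card := by
      rw [Finset.card_filter, Finset.card_filter]
      exact Equiv.sum_comp g (fun y => if y.1 = x then 1 else 0)
    have h2 : Finset.univ.filter (fun y : (K ⊕ W) × Fin D => y.1 = x) = {x} ×ˢ Finset.univ := by
      ext y
      simp only [Finset.mem_filter, Finset.mem_univ, true_and, Finset.mem_product,
        Finset.mem_singleton, and_true]
    rw [this, h2, Finset.card_product]
    simp

theorem construct {m D : ℕ} (hD : 3 ≤ D)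
    (hbinom : 2 * (m - 1) ≤ Nat.choose (2 * (D - 1)) (D - 1))
    (ρ : Fin m → ℕ) (lam : Fin m → ℕ)
    (S : (r : Fin m) → Fin (lam r) → Fin m)
    (hScont : ∀ i : Fin m, tabCount lam S i = D * ρ i)
    {K : Type} [Fintype K] [DecidableEq K] (ty : K → Fin m) (k0 : K)
    (hρ : ∀ i, ρ i ≤ 2 * (D - 2) * (Finset.univ.filter (fun k => ty k = i)).card) :
    ∃ (E : Type) (_ : Fintype E) (_ : DecidableEq E)
    (TL : Fin m → K × (Fin (2 * D - 3) ⊕ Fin 3) → E) (TR : (r : Fin m) → Fin (lam r) → E)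
    (φ0 : E → Fin m),
    (∀ a, (∑ r, (Finset.univ.filter (fun c => TL r c = a)).card) +
      ∑ r, (Finset.univ.filter (fun c => TR r c = a)).card = D) ∧
    (∀ r c, φ0 (TL r c) = r) ∧ (∀ r c, φ0 (TR r c) = S r c) ∧
    (∀ φ : E → Fin m, (∀ c, Function.Injective (fun r => φ (TL r c))) →
      (∃ π : Equiv.Perm (Fin m), ∀ r c, φ (TR r c) = π (S r c)) ∧
      ∀ c, Even (Finset.univ.filter (fun c' => ∀ r, φ (TL r c') = φ (TL r c))).card) := by
  classical
  have hfam := fun i => exists_family hD hbinom i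
  choose A hAcard hAinj using hfam
  obtain ⟨W, hW⟩ := exists_W (P := Fin (2 * D - 3)) ty
    (fun i => (Finset.univ.filter (fun k => ty k = i)).card + ρ i) (by
      intro i
      have := hρ i
      rw [Fintype.card_fin]
      obtain ⟨t, rfl⟩ : ∃ t, D = t + 2 := ⟨D - 2, by omega⟩
      have e3 : 2 * (t + 2) - 3 = 2 * t + 1 := by omega
      have e4 : t + 2 - 2 = t := by omega
      rw [e3]; rw [e4] at this
      nlinarith)
  obtain ⟨F, hFt, hFs, hFw, hFc⟩ := exists_F (R := Σ r : Fin m, Fin (lam r)) hD ty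
    (fun b => S b.1 b.2) ρ k0 (by
      intro i
      rw [← hScont i, Finset.card_filter, Fintype.sum_sigma]
      unfold tabCount
      refine Finset.sum_congr rfl fun r _ => ?_
      rw [Finset.card_filter]) W hW
  have hcyc : ∀ i : Fin m, ∃ f : Equiv.Perm K,
      f.IsCycleOn ((insert k0 (Finset.univ.filter (fun k => ty k = i)) : Finset K) : Set K) ∧
      f.support ⊆ insert k0 (Finset.univ.filter (fun k => ty k = i)) :=
    fun i => Finset.exists_cycleOn _
  choose f hfc hfs using hcyc
  have hfix : ∀ k r, k ≠ k0 → ty k ≠ r → f r k = k := by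
    intro k r h1 h2
    by_contra h
    have := hfs r (Equiv.Perm.mem_support.2 h)
    simp [h1, h2] at this
  let bit : Fin m → Fin m → Fin (2 * D - 3) ⊕ Fin 3 → Bool := fun i r c =>
    Sum.elim (fun c => decide (c ∈ A i r)) (fun t => decide (t ≠ 1)) c
  have hbit : ∀ i r b, (Finset.univ.filter (fun c => bit i r c = b)).card = D := by
    intro i r b
    rw [Finset.card_filter, Fintype.sum_sum_type]
    have h1 := hAcard i r
    cases b
    · simp only [bit, Sum.elim_inl, Sum.elim_inr, decide_eq_false_iff_not]
      rw [← Finset.card_filter, Finset.filter_not, Finset.filter_mem_eq_inter, Finset.univ_inter,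
        ← Finset.compl_eq_univ_sdiff, Finset.card_compl, h1, Fintype.card_fin, Fin.sum_univ_three]
      simp
      omega
    · simp only [bit, Sum.elim_inl, Sum.elim_inr, decide_eq_true_iff]
      rw [← Finset.card_filter, Finset.filter_mem_eq_inter, Finset.univ_inter, h1,
        Fin.sum_univ_three]
      simp
      omega
  let E := {p : Fin m × K × Bool // ¬ ty p.2.1 = p.1} ⊕ (K ⊕ W)
  let T0 : Fin m → K × (Fin (2 * D - 3) ⊕ Fin 3) → E := fun r kc =>
    if h : ty kc.1 = r then Sum.inr (F (Sum.inl kc))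
    else Sum.inl ⟨(r, kc.1, bit (ty kc.1) r kc.2), h⟩
  let hp : Fin m → Equiv.Perm (K × (Fin (2 * D - 3) ⊕ Fin 3)) := fun r =>
    { toFun := fun kc => (if kc.2 = Sum.inr 2 then f r kc.1 else kc.1, kc.2)
      invFun := fun kc => (if kc.2 = Sum.inr 2 then (f r).symm kc.1 else kc.1, kc.2)
      left_inv := by
        rintro ⟨k, c⟩
        by_cases h : c = Sum.inr 2 <;> simp [h]
      right_inv := by
        rintro ⟨k, c⟩
        by_cases h : c = Sum.inr 2 <;> simp [h] }
  let ψ : E → Fin m := Sum.elim (fun p => p.1.1) (Sum.elim ty (fun w : W => ty w.1.1))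
  have hψ0 : ∀ r kc, ψ (T0 r kc) = r := by
    intro r kc
    by_cases h : ty kc.1 = r
    · simp only [T0, h, dite_true, ψ, Sum.elim_inr]
      rw [hFt]; exact h
    · simp [T0, h, ψ]
  refine ⟨E, inferInstance, inferInstance, fun r kc => T0 r (hp r kc),
    fun r c => Sum.inr (F (Sum.inr ⟨r, c⟩)), ψ, ?_, ?_, ?_, ?_⟩
  · intro a
    have e0 : ∀ r, (Finset.univ.filter (fun c => T0 r (hp r c) = a)).card =
        (Finset.univ.filter (fun c => T0 r c = a)).card := by
      intro r
      rw [Finset.card_filter, Finset.card_filter]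
      exact Equiv.sum_comp (hp r) (fun y => if T0 r y = a then 1 else 0)
    simp only [e0]
    match a with
    | Sum.inl ⟨(j, k, b), hne⟩ =>
      have z : ∑ r : Fin m, (Finset.univ.filter (fun c : Fin (lam r) =>
          (Sum.inr (F (Sum.inr ⟨r, c⟩)) : E) = Sum.inl ⟨(j, k, b), hne⟩)).card = 0 := by
        simp
      rw [z, add_zero, Finset.sum_eq_single j]
      · refine Eq.trans ?_ (hbit (ty k) j b)
        refine (Finset.card_bij (fun c _ => (k, c)) ?_ ?_ ?_).symm
        · intro c hc
          have hne' : ¬ ty k = j := hne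
          simp only [Finset.mem_filter, Finset.mem_univ, true_and] at hc ⊢
          simp [T0, hne', hc]
        · intro c _ c' _ h
          simpa using h
        · rintro ⟨k', c⟩ hc
          simp only [Finset.mem_filter, Finset.mem_univ, true_and] at hc
          by_cases h : ty k' = j
          · simp [T0, h] at hc
          · simp only [T0, h, dite_false, Sum.inl.injEq, Subtype.mk.injEq, Prod.mk.injEq,
              true_and] at hc
            obtain ⟨rfl, hc⟩ := hc
            exact ⟨c, by simpa using hc, rfl⟩
      · intro r _ hr
        rw [Finset.card_eq_zero, Finset.filter_eq_empty_iff]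
        intro kc _ h
        have := congrArg ψ h
        rw [hψ0] at this
        exact hr this
      · simp
    | Sum.inr x =>
      have hinr : ∀ y, ((Sum.inr y : E) = Sum.inr x) ↔ y = x := fun y => Sum.inr_injective.eq_iff
      refine Eq.trans ?_ (hFc x)
      rw [Finset.card_filter (fun b => F b = x), Fintype.sum_sum_type, Fintype.sum_sigma]
      congr 1
      · simp only [Finset.card_filter]
        rw [Finset.sum_comm]
        refine Finset.sum_congr rfl fun kc _ => ?_
        rw [Finset.sum_eq_single (ty kc.1)]
        · simp only [T0, dite_true]
          exact if_congr (hinr _) rfl rfl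
        · intro r _ hr
          simp [T0, hr.symm]
        · simp
      · refine Finset.sum_congr rfl fun r _ => ?_
        rw [Finset.card_filter]
        exact Finset.sum_congr rfl fun c _ => if_congr (hinr _) rfl rfl
  · intro r c
    exact hψ0 r _
  · intro r c
    exact hFt _
  · intro φ hφ
    let σ : K → Fin m → Fin m := fun k r => φ (T0 r (k, Sum.inr 0))
    have hp1 : ∀ r k c, c ≠ Sum.inr 2 → hp r (k, c) = (k, c) := by
      intro r k c h; simp [hp, h]
    have hp2 : ∀ r k, hp r (k, Sum.inr 2) = (f r k, Sum.inr 2) := by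
      intro r k; simp [hp]
    have hσinj : ∀ k, Function.Injective (σ k) := by
      intro k
      have := hφ (k, Sum.inr 0)
      simp only [hp1 _ k (Sum.inr 0) (by simp)] at this
      exact this
    have hTs : ∀ k, T0 (ty k) (k, Sum.inr 2) = T0 (ty k) (k, Sum.inr 0) := by
      intro k; simp [T0, hFs]
    have hT2 : ∀ k r, T0 r (k, Sum.inr 2) = T0 r (k, Sum.inr 0) := by
      intro k r
      by_cases h : ty k = r
      · subst h; exact hTs k
      · simp [T0, h, bit]
    -- goodness of each subblock
    have hgood : ∀ k c, c ≠ Sum.inr 2 → ∀ r, φ (T0 r (k, c)) = σ k r := by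
      intro k
      have hv : Function.Injective (fun r => φ (T0 r (k, Sum.inr 1))) := by
        have := hφ (k, Sum.inr 1)
        simp only [hp1 _ k (Sum.inr 1) (by simp)] at this
        exact this
      obtain ⟨h1, h2⟩ := force_block (ty k) (A (ty k)) (D - 2) (hAcard (ty k)) (hAinj (ty k))
        (σ k) (fun r => φ (T0 r (k, Sum.inr 1))) (fun c => φ (T0 (ty k) (k, Sum.inl c)))
        (by
          intro c
          have := hφ (k, Sum.inl c)
          simp only [hp1 _ k (Sum.inl c) (by simp)] at this
          convert this using 2 with r
          by_cases h : r = ty k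
          · simp [h]
          · have h' : ¬ ty k = r := fun h' => h h'.symm
            by_cases hc : c ∈ A (ty k) r <;> simp [h, hc, σ, T0, h', bit])
        (hσinj k) hv (by simp [σ, T0, hFs])
      intro c hc r
      match c, hc with
      | Sum.inl c, _ =>
        by_cases h : r = ty k
        · subst h; exact h2 c
        · have h' : ¬ ty k = r := fun h' => h h'.symm
          have h3 := congrFun h1 r
          by_cases hc : c ∈ A (ty k) r
          · simp [σ, T0, h', bit, hc]
          · rw [h3]
            simp [T0, h', bit, hc]
      | Sum.inr 0, _ => rfl
      | Sum.inr 1, _ => exact (congrFun h1 r).symm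
      | Sum.inr 2, hc => exact absurd rfl hc
    have hlinj : ∀ k, Function.Injective (fun r => σ (f r k) r) := by
      intro k
      have := hφ (k, Sum.inr 2)
      simp only [hp2, hT2] at this
      exact this
    have hlink : ∀ k, k ≠ k0 → (fun r => σ (f r k) r) = σ k := by
      intro k hk
      apply eq_of_agree_off _ _ (hlinj k) (hσinj k) (ty k)
      intro j hj
      rw [hfix k j hk hj.symm]
    have hchain : ∀ i k, k ∈ insert k0 (Finset.univ.filter (fun k => ty k = i)) →
        σ k i = σ k0 i := by
      intro i
      apply chain_const _ (f i) (hfc i) k0 (by simp) (fun k => σ k i)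
      intro k _ hk
      exact congrFun (hlink k hk) i
    have hall : ∀ k, (fun r => σ (f r k) r) = σ k := by
      intro k
      by_cases hk : k = k0
      · subst hk
        funext r
        exact hchain r _ ((hfc r).1.mapsTo (by simp))
      · exact hlink k hk
    have hcol : ∀ k c r, φ (T0 r (hp r (k, c))) = σ k r := by
      intro k c r
      by_cases hc : c = Sum.inr 2
      · subst hc
        rw [hp2, hT2]
        exact congrFun (hall k) r
      · rw [hp1 _ _ _ hc]
        exact hgood k c hc r
    have hX : ∀ x : K ⊕ W, φ (Sum.inr x) = σ k0 (ψ (Sum.inr x)) := by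
      intro x
      match x with
      | Sum.inl k =>
        have h1 : (Sum.inr (Sum.inl k) : E) = T0 (ty k) (k, Sum.inr 0) := by
          simp [T0, hFs]
        rw [h1, hψ0]
        exact hchain (ty k) k (by simp)
      | Sum.inr w =>
        have h1 : (Sum.inr (Sum.inr w) : E) = T0 (ty w.1.1) (w.1.1, Sum.inl w.1.2) := by
          simp [T0, hFw]
        rw [h1, hgood _ _ (by simp), hψ0]
        exact hchain (ty w.1.1) w.1.1 (by simp)
    refine ⟨⟨Equiv.ofBijective (σ k0) (Finite.injective_iff_bijective.1 (hσinj k0)), ?_⟩, ?_⟩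
    · intro r c
      rw [hX]
      have : ψ (Sum.inr (F (Sum.inr ⟨r, c⟩))) = S r c := hFt _
      rw [this]; rfl
    · rintro ⟨k, c⟩
      have : (Finset.univ.filter (fun c' : K × (Fin (2 * D - 3) ⊕ Fin 3) =>
          ∀ r, φ (T0 r (hp r c')) = φ (T0 r (hp r (k, c))))) =
          (Finset.univ.filter (fun k' => σ k' = σ k)) ×ˢ Finset.univ := by
        ext ⟨k', c'⟩
        simp [hcol, funext_iff]
      rw [this, Finset.card_product, Finset.card_univ, Fintype.card_sum, Fintype.card_fin,
        Fintype.card_fin]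
      apply Even.mul_left
      exact ⟨D, by omega⟩
/-- **Tableau Lifting Theorem, odd case** (Theorem 13 of the paper, `D` odd). -/
theorem tableau_lifting_odd
    (D m d : ℕ) (hD : 3 ≤ D) (hDodd : Odd D) (hm : 2 ≤ m) (hd : 1 ≤ d)
    (hbinom : 2 * (m - 1) ≤ Nat.choose (2 * (D - 1)) (D - 1))
    (ρ : Fin m → ℕ) (hρmono : ∀ i j : Fin m, i ≤ j → ρ j ≤ ρ i)
    (hρsum : ∑ i, ρ i = d)
    (lam : Fin m → ℕ) (hlammono : ∀ i j : Fin m, i ≤ j → lam j ≤ lam i)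
    (hlamsum : ∑ r, lam r = d * D)
    (S : (r : Fin m) → Fin (lam r) → Fin m)
    (hSreg : TabRegular lam S)
    (hScont : ∀ i : Fin m, tabCount lam S i = D * ρ i)
    (eρ : ℕ) (heρ : eρ = ∑ i : Fin m, 2 * ⌈(ρ i : ℚ) / (2 * ((D : ℚ) - 2))⌉₊)
    (δ : ℕ) (hδ : δ = m * eρ + d) :
    ∃ T : (r : Fin m) → Fin (eρ * D + lam r) → Fin δ,
      (∀ a : Fin δ, tabCount (fun r => eρ * D + lam r) T a = D) ∧
      (∀ φ : Fin δ → Fin m,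
          TabRegular (fun r => eρ * D + lam r) (fun r c => φ (T r c)) →
          ∃ π : Equiv.Perm (Fin m),
            tabRight lam (eρ * D) (fun r c => φ (T r c)) = fun r c => π (S r c)) ∧
      (∀ φ : Fin δ → Fin m,
          TabRegular (fun r => eρ * D + lam r) (fun r c => φ (T r c)) →
          TabDuplex (fun _ : Fin m => eρ * D) (tabLeft lam (eρ * D) (fun r c => φ (T r c)))) ∧
      (∃ φ : Fin δ → Fin m,
          TabRegular (fun r => eρ * D + lam r) (fun r c => φ (T r c)) ∧
          tabRight lam (eρ * D) (fun r c => φ (T r c)) = S) := by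
  classical
  let N : Fin m → ℕ := fun i => ⌈(ρ i : ℚ) / (2 * ((D : ℚ) - 2))⌉₊
  have hNρ : ∀ i, ρ i ≤ 2 * (D - 2) * N i := by
    intro i
    have h1 : (ρ i : ℚ) / (2 * ((D : ℚ) - 2)) ≤ N i := Nat.le_ceil _
    have hD' : (3 : ℚ) ≤ D := by exact_mod_cast hD
    rw [div_le_iff₀ (by linarith)] at h1
    have h2 : ((D - 2 : ℕ) : ℚ) = (D : ℚ) - 2 := by
      rw [Nat.cast_sub (by omega)]; norm_num
    have : (ρ i : ℚ) ≤ ((2 * (D - 2) * N i : ℕ) : ℚ) := by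
      push_cast [h2]; linarith
    exact_mod_cast this
  have hcardK : ∀ i, (Finset.univ.filter (fun k : Σ i, Fin (N i) => k.1 = i)).card = N i := by
    intro i
    rw [Finset.card_filter, Fintype.sum_sigma, Finset.sum_eq_single i]
    · simp
    · intro j _ hj
      simp [hj]
    · simp
  obtain ⟨i0, hi0⟩ : ∃ i, 0 < ρ i := by
    by_contra h
    push Not at h
    have : ∑ i, ρ i = 0 := Finset.sum_eq_zero fun i _ => Nat.le_zero.1 (h i)
    omega
  have hN0 : 0 < N i0 := by
    by_contra h
    have h1 := hNρ i0
    have h2 : N i0 = 0 := by omega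
    rw [h2] at h1
    omega
  obtain ⟨E, _, _, TL, TR, φ0, h1, h2, h3, h4⟩ := construct hD hbinom ρ lam S hScont
    (K := Σ i, Fin (N i)) Sigma.fst ⟨i0, ⟨0, hN0⟩⟩ (by intro i; rw [hcardK]; exact hNρ i)
  refine reduce_abs hm (by omega) lam hlamsum S hSreg hδ ?_ TL TR h1 φ0 h2 h3 h4
  rw [Fintype.card_prod, Fintype.card_sigma, Fintype.card_sum, Fintype.card_fin, Fintype.card_fin,
    heρ, ← Finset.mul_sum]
  simp only [Fintype.card_fin]
  have : 2 * D - 3 + 3 = 2 * D := by omega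
  rw [this]
  change (∑ i, N i) * (2 * D) = 2 * (∑ i, N i) * D
  ring
end

section
/- For every even integer D ≥ 4 and every integer K ≥ 1, there exists a (D,K)-hypergraph whose number of block edges is exactly ⌈K/(D−2)⌉. -/
open scoped BigOperators

/-- A `(D,K)`-hypergraph: a finite vertex set `V` together with block edges and name
edges, each forming a set partition of `V`, where every block edge has exactly `D`
vertices, every name edge has fewer than `D` vertices, there are exactly `K` more name
edges than block edges, the hypergraph is connected, and some name edge and some block
edge share at least two vertices. -/
structure DKHypergraph (D K : ℕ) (V : Type) [Fintype V] [DecidableEq V] where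
  blockEdges : Finpartition (Finset.univ : Finset V)
  nameEdges : Finpartition (Finset.univ : Finset V)
  block_card : ∀ e ∈ blockEdges.parts, e.card = D
  name_card : ∀ e ∈ nameEdges.parts, e.card < D
  count_diff : nameEdges.parts.card = blockEdges.parts.card + K
  connected : ∀ v w : V, ∃ (n : ℕ) (e : Fin (n + 1) → Finset V),
      (∀ i, e i ∈ blockEdges.parts ∪ nameEdges.parts) ∧
      v ∈ e 0 ∧ w ∈ e (Fin.last n) ∧
      ∀ i : Fin n, ((e i.castSucc) ∩ (e i.succ)).Nonempty
  share : ∃ eN ∈ nameEdges.parts, ∃ eB ∈ blockEdges.parts, 2 ≤ (eN ∩ eB).card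

namespace DKAux

def P {n : ℕ} (f : Fin n → ℕ) : Finpartition (Finset.univ : Finset (Fin n)) where
  parts := (Finset.univ.image f).image (fun c => Finset.univ.filter (fun v => f v = c))
  supIndep := by
    rw [Finset.supIndep_iff_pairwiseDisjoint]
    intro a ha b hb hab
    simp only [Finset.coe_image, Set.mem_image] at ha hb
    obtain ⟨c, -, rfl⟩ := ha
    obtain ⟨d, -, rfl⟩ := hb
    simp only [Function.onFun, id]
    rw [Finset.disjoint_left]
    intro x hx hy
    simp only [Finset.mem_filter, Finset.mem_univ, true_and] at hx hy
    exact hab (by rw [← hx, ← hy])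
  sup_parts := by
    ext x
    simp [Finset.mem_sup]
  bot_notMem := by
    intro h
    simp only [Finset.mem_image, Finset.mem_univ, true_and] at h
    obtain ⟨c, ⟨a, rfl⟩, h⟩ := h
    have : a ∈ (⊥ : Finset (Fin n)) := by rw [← h]; simp
    simp at this

theorem mem_P {n : ℕ} (f : Fin n → ℕ) (s : Finset (Fin n)) :
    s ∈ (P f).parts ↔ ∃ a, Finset.univ.filter (fun v => f v = f a) = s := by
  simp [P]

theorem card_P {n : ℕ} (f : Fin n → ℕ) :
    (P f).parts.card = (Finset.univ.image f).card := by
  apply Finset.card_image_of_injOn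
  intro c hc d hd h
  simp only [Finset.coe_image, Set.mem_image] at hc
  obtain ⟨a, -, rfl⟩ := hc
  have : a ∈ Finset.univ.filter (fun v => f v = d) := by
    beta_reduce at h
    rw [← h]; simp
  simpa using this

theorem chain {V : Type} [DecidableEq V] (S : Finset (Finset V))
    (hS : ∀ v, ∃ e ∈ S, v ∈ e) (v w : V)
    (h : Relation.ReflTransGen (fun a b => ∃ e ∈ S, a ∈ e ∧ b ∈ e) v w) :
    ∃ (n : ℕ) (e : Fin (n + 1) → Finset V),
      (∀ i, e i ∈ S) ∧ v ∈ e 0 ∧ w ∈ e (Fin.last n) ∧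
      ∀ i : Fin n, ((e i.castSucc) ∩ (e i.succ)).Nonempty := by
  induction h using Relation.ReflTransGen.head_induction_on with
  | refl =>
    obtain ⟨e, he, hv⟩ := hS w
    exact ⟨0, fun _ => e, fun _ => he, hv, hv, fun i => i.elim0⟩
  | @head a c h1 _ ih =>
    obtain ⟨e0, he0, ha, hc⟩ := h1
    obtain ⟨n, e, h1, h2, h3, h4⟩ := ih
    refine ⟨n + 1, Fin.cons e0 e, ?_, ?_, ?_, ?_⟩
    · intro i
      refine Fin.cases ?_ (fun j => ?_) i
      · simpa using he0
      · simpa using h1 j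
    · simpa using ha
    · rw [← Fin.succ_last]; simpa using h3
    · intro i
      refine Fin.cases ?_ (fun j => ?_) i
      · exact ⟨c, by simpa using ⟨hc, h2⟩⟩
      · rw [← Fin.succ_castSucc]
        simpa using h4 j

def r (D e v : ℕ) : ℕ := if v ≤ e then 0 else if v % D = 0 then v - 1 else v

theorem r_image (D e B : ℕ) (he2 : e + 2 ≤ D) (hB : 1 ≤ B) :
    ((Finset.range (D * B)).image (r D e)).card + (e + (B - 1)) = D * B := by
  have hDB : D ≤ D * B := Nat.le_mul_of_pos_right _ hB
  set T := Finset.Ioc 0 e ∪ (Finset.range (B - 1)).image (fun i => (i + 1) * D) with hT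
  have hTc : T.card = e + (B - 1) := by
    rw [hT, Finset.card_union_of_disjoint, Finset.card_image_of_injective]
    · simp
    · intro a b h
      have := Nat.eq_of_mul_eq_mul_right (by omega) h
      omega
    · rw [Finset.disjoint_left]
      intro x hx hy
      simp only [Finset.mem_Ioc, Finset.mem_image] at hx hy
      obtain ⟨i, -, rfl⟩ := hy
      nlinarith
  have hTs : T ⊆ Finset.range (D * B) := by
    intro x hx
    simp only [hT, Finset.mem_union, Finset.mem_Ioc, Finset.mem_image, Finset.mem_range] at hx ⊢
    rcases hx with hx | ⟨i, hi, rfl⟩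
    · omega
    · rw [mul_comm]; exact Nat.mul_lt_mul_of_pos_left (by omega) (by omega)
  have him : (Finset.range (D * B)).image (r D e) = Finset.range (D * B) \ T := by
    have hpred : ∀ x, 0 < x → x % D = 0 → (x - 1) % D ≠ 0 := by
      intro x hx h0 h1
      have a := Nat.dvd_of_mod_eq_zero h0
      have b := Nat.dvd_of_mod_eq_zero h1
      have c := (Nat.dvd_sub a b)
      have : x - (x - 1) = 1 := by omega
      rw [this] at c
      have := Nat.le_of_dvd one_pos c
      omega
    have memT : ∀ x, x < D * B → (x ∈ T ↔ 0 < x ∧ (x ≤ e ∨ x % D = 0)) := by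
      intro x hx
      simp only [hT, Finset.mem_union, Finset.mem_Ioc, Finset.mem_image, Finset.mem_range]
      constructor
      · rintro (h | ⟨i, hi, rfl⟩)
        · exact ⟨h.1, Or.inl h.2⟩
        · exact ⟨Nat.mul_pos (by omega) (by omega), Or.inr (by simp)⟩
      · rintro ⟨h0, h | h⟩
        · exact Or.inl ⟨h0, h⟩
        · obtain ⟨k, rfl⟩ := Nat.dvd_of_mod_eq_zero h
          have hk : k < B := Nat.lt_of_mul_lt_mul_left hx
          have hk0 : 0 < k := Nat.pos_of_mul_pos_left h0
          refine Or.inr ⟨k - 1, by omega, ?_⟩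
          rw [Nat.sub_add_cancel hk0, mul_comm]
    ext y
    simp only [Finset.mem_image, Finset.mem_sdiff, Finset.mem_range]
    constructor
    · rintro ⟨x, hx, rfl⟩
      have hlt : r D e x < D * B := by unfold r; split_ifs <;> omega
      refine ⟨hlt, ?_⟩
      rw [memT _ hlt]
      unfold r
      split_ifs with h1 h2
      · simp
      · have := hpred x (by omega) h2
        have : D ≤ x := Nat.le_of_dvd (by omega) (Nat.dvd_of_mod_eq_zero h2)
        omega
      · omega
    · rintro ⟨hy, h⟩
      rw [memT y hy] at h
      refine ⟨y, hy, ?_⟩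
      unfold r
      split_ifs <;> omega
  rw [him, ← hTc, Finset.card_sdiff_add_card_eq_card hTs, Finset.card_range]

theorem image_fin (n : ℕ) (g : ℕ → ℕ) :
    (Finset.univ : Finset (Fin n)).image (fun v => g v.1) = (Finset.range n).image g := by
  ext x
  simp only [Finset.mem_image, Finset.mem_univ, true_and, Finset.mem_range]
  exact ⟨fun ⟨a, h⟩ => ⟨a, a.2, h⟩, fun ⟨a, h, h'⟩ => ⟨⟨a, h⟩, h'⟩⟩

theorem card_fin (n : ℕ) (p : ℕ → Prop) [DecidablePred p] :
    ((Finset.univ : Finset (Fin n)).filter (fun v => p v.1)).card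
      = ((Finset.range n).filter p).card := by
  rw [← Finset.card_map Fin.valEmbedding]
  congr 1
  ext x
  simp only [Finset.mem_map, Finset.mem_filter, Finset.mem_univ, true_and, Finset.mem_range,
    Fin.valEmbedding_apply]
  exact ⟨fun ⟨a, h, h'⟩ => h' ▸ ⟨a.2, h⟩, fun ⟨h, h'⟩ => ⟨⟨x, h⟩, h', rfl⟩⟩

theorem conn (D e B : ℕ) (he2 : e + 2 ≤ D) (v w : Fin (D * B)) :
    Relation.ReflTransGen (fun a b => ∃ s ∈
      (P (fun v : Fin (D * B) => v.1 / D)).parts ∪ (P (fun v : Fin (D * B) => r D e v.1)).parts,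
      a ∈ s ∧ b ∈ s) v w := by
  set R := (fun a b => ∃ s ∈
      (P (fun v : Fin (D * B) => v.1 / D)).parts ∪ (P (fun v : Fin (D * B) => r D e v.1)).parts,
      a ∈ s ∧ b ∈ s) with hR
  have hsymm : Std.Symm R := ⟨fun a b ⟨s, h, h1, h2⟩ => ⟨s, h, h2, h1⟩⟩
  have step : ∀ (x : ℕ) (h : x + 1 < D * B), R ⟨x, by omega⟩ ⟨x + 1, h⟩ := by
    intro x h
    by_cases hx : (x + 1) % D = 0
    · refine ⟨Finset.univ.filter (fun v => r D e v.1 = r D e x), Finset.mem_union_right _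
        ((mem_P _ _).2 ⟨⟨x, by omega⟩, rfl⟩), by simp, ?_⟩
      have h1 : D ≤ x + 1 := Nat.le_of_dvd (by omega) (Nat.dvd_of_mod_eq_zero hx)
      simp only [Finset.mem_filter, Finset.mem_univ, true_and]
      have h2 : x % D ≠ 0 := by
        intro h0
        have c := Nat.dvd_sub (Nat.dvd_of_mod_eq_zero hx) (Nat.dvd_of_mod_eq_zero h0)
        rw [Nat.add_sub_cancel_left] at c
        have := Nat.le_of_dvd one_pos c
        omega
      unfold r
      rw [if_neg (by omega), if_pos hx, if_neg (by omega), if_neg h2]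
      omega
    · refine ⟨Finset.univ.filter (fun v => v.1 / D = x / D), Finset.mem_union_left _
        ((mem_P _ _).2 ⟨⟨x, by omega⟩, rfl⟩), by simp, ?_⟩
      simp only [Finset.mem_filter, Finset.mem_univ, true_and]
      rw [Nat.succ_div, if_neg (fun hd => hx (Nat.mod_eq_zero_of_dvd hd))]
      rfl
  have zero : ∀ (x : ℕ) (h : x < D * B), Relation.ReflTransGen R ⟨0, by omega⟩ ⟨x, h⟩ := by
    intro x
    induction x with
    | zero => intro h; exact .refl
    | succ x ih => intro h; exact (ih (by omega)).tail (step x h)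
  exact ((Relation.ReflTransGen.stdSymm (r := R)).symm _ _ (zero v v.2)).trans (zero w w.2)

theorem block_sz (D B c : ℕ) (hD : 0 < D) (hc : c < B) :
    ((Finset.range (D * B)).filter (fun x => x / D = c)).card = D := by
  have : (Finset.range (D * B)).filter (fun x => x / D = c) = Finset.Ico (c * D) ((c + 1) * D) := by
    ext x
    simp only [Finset.mem_filter, Finset.mem_range, Finset.mem_Ico]
    rw [Nat.div_eq_iff hD]
    have h1 : (c + 1) * D ≤ D * B := by rw [mul_comm D]; exact Nat.mul_le_mul_right _ hc
    have h2 : (c + 1) * D = c * D + D := by ring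
    omega
  rw [this, Nat.card_Ico]
  have h2 : (c + 1) * D = c * D + D := by ring
  omega

theorem main (D K B e : ℕ) (hD : 4 ≤ D) (he : 1 ≤ e) (he2 : e + 2 ≤ D) (hB : 1 ≤ B)
    (hK : K + e = B * (D - 2) + 1) :
    ∃ (n : ℕ) (H : DKHypergraph D K (Fin n)), H.blockEdges.parts.card = B := by
  have hDB : D ≤ D * B := Nat.le_mul_of_pos_right _ hB
  have hbc : (P (fun v : Fin (D * B) => v.1 / D)).parts.card = B := by
    rw [card_P, image_fin (D * B) (fun x => x / D)]
    have : (Finset.range (D * B)).image (fun x => x / D) = Finset.range B := by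
      ext c
      simp only [Finset.mem_image, Finset.mem_range]
      constructor
      · rintro ⟨x, hx, rfl⟩
        exact Nat.div_lt_of_lt_mul hx
      · intro h
        exact ⟨D * c, Nat.mul_lt_mul_of_pos_left h (by omega),
          Nat.mul_div_cancel_left _ (by omega)⟩
    rw [this, Finset.card_range]
  refine ⟨D * B, ⟨P (fun v => v.1 / D), P (fun v => r D e v.1), ?_, ?_, ?_, ?_, ?_⟩, hbc⟩
  · intro s hs
    obtain ⟨a, rfl⟩ := (mem_P _ _).1 hs
    rw [card_fin (D * B) (fun x => x / D = a.1 / D)]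
    exact block_sz D B _ (by omega) (Nat.div_lt_of_lt_mul a.2)
  · intro s hs
    obtain ⟨a, rfl⟩ := (mem_P _ _).1 hs
    rw [card_fin (D * B) (fun x => r D e x = r D e a.1)]
    generalize r D e a.1 = c
    by_cases hc : c = 0
    · have : (Finset.range (D * B)).filter (fun x => r D e x = c) ⊆ Finset.range (e + 1) := by
        intro x hx
        simp only [Finset.mem_filter, Finset.mem_range] at hx ⊢
        obtain ⟨-, hx⟩ := hx
        unfold r at hx
        split_ifs at hx with h1 h2
        · omega
        · have : D ≤ x := Nat.le_of_dvd (by omega) (Nat.dvd_of_mod_eq_zero h2)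
          omega
        · omega
      have := Finset.card_le_card this
      rw [Finset.card_range] at this
      omega
    · have : (Finset.range (D * B)).filter (fun x => r D e x = c) ⊆ {c, c + 1} := by
        intro x hx
        simp only [Finset.mem_filter, Finset.mem_range, Finset.mem_insert,
          Finset.mem_singleton] at hx ⊢
        obtain ⟨-, hx⟩ := hx
        unfold r at hx
        split_ifs at hx <;> omega
      have := (Finset.card_le_card this).trans Finset.card_le_two
      omega
  · rw [hbc, card_P, image_fin (D * B) (r D e)]
    have h := r_image D e B he2 hB
    obtain ⟨d, rfl⟩ : ∃ d, D = d + 2 := ⟨D - 2, by omega⟩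
    have h2 : (d + 2) * B = B * d + 2 * B := by ring
    simp only [Nat.add_sub_cancel] at hK
    omega
  · intro v w
    refine chain _ ?_ v w (conn D e B he2 v w)
    intro v
    exact ⟨_, Finset.mem_union_left _ ((mem_P _ _).2 ⟨v, rfl⟩), by simp⟩
  · refine ⟨_, (mem_P _ _).2 ⟨⟨0, by omega⟩, rfl⟩, _, (mem_P _ _).2 ⟨⟨0, by omega⟩, rfl⟩, ?_⟩
    have : ({⟨0, by omega⟩, ⟨1, by omega⟩} : Finset (Fin (D * B))).card = 2 :=
      Finset.card_pair (by simp)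
    rw [← this]
    apply Finset.card_le_card
    intro x hx
    simp only [Finset.mem_insert, Finset.mem_singleton] at hx
    simp only [Finset.mem_inter, Finset.mem_filter, Finset.mem_univ, true_and]
    rcases hx with rfl | rfl
    · simp
    · refine ⟨by simp [r, he], ?_⟩
      show 1 / D = 0 / D
      rw [Nat.div_eq_of_lt (by omega), Nat.div_eq_of_lt (by omega)]

end DKAux

/-- For every even `D ≥ 4` and every `K ≥ 1` there is a `(D,K)`-hypergraph with exactly
`⌈K/(D-2)⌉` block edges. -/
theorem exists_DK_hypergraph (D K : ℕ) (hD : 4 ≤ D) (hDeven : Even D) (hK : 1 ≤ K) :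
    ∃ (n : ℕ) (H : DKHypergraph D K (Fin n)),
      H.blockEdges.parts.card = ⌈(K : ℚ) / ((D : ℚ) - 2)⌉₊ := by
  obtain ⟨d, rfl⟩ : ∃ d, D = d + 2 := ⟨D - 2, by omega⟩
  have hd : (0 : ℚ) < d := by exact_mod_cast (by omega : 0 < d)
  have hK' : (0 : ℚ) < K := by exact_mod_cast hK
  have e1 : (((d + 2 : ℕ) : ℚ) - 2) = d := by push_cast; ring
  rw [e1]
  have hpos : (0 : ℚ) < K / d := by positivity
  have h1 := Nat.le_ceil ((K : ℚ) / d)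
  have h2 := Nat.ceil_lt_add_one hpos.le
  have h3 : 1 ≤ ⌈(K : ℚ) / d⌉₊ := Nat.ceil_pos.2 hpos
  generalize ⌈(K : ℚ) / d⌉₊ = B at *
  rw [div_le_iff₀ hd] at h1
  rw [← sub_lt_iff_lt_add, lt_div_iff₀ hd, sub_mul, sub_lt_iff_lt_add] at h2
  have h1' : K ≤ B * d := by exact_mod_cast h1
  have h2' : B * d < K + 1 * d := by exact_mod_cast h2
  exact DKAux.main (d + 2) K B (B * d + 1 - K) hD (by omega) (by omega) h3
    (by simp only [Nat.add_sub_cancel]; omega)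
end

section
/- For every odd integer D ≥ 3 and every integer K ≥ 1, there exists a (D,K)-paired-hypergraph whose number of block edges is exactly 2·⌈K/(2(D−2))⌉. -/
open scoped BigOperators

/-- A `(D,K)`-paired-hypergraph: a `(D,K)`-hypergraph whose block edges can be grouped
into disjoint pairs `{e, f e}` (via a fixed-point-free involution `f` of the block
edges) such that the two block edges of each pair are connected by a name edge. -/
structure DKPairedHypergraph (D K : ℕ) (V : Type) [Fintype V] [DecidableEq V]
    extends DKHypergraph D K V where
  paired : ∃ f : Finset V → Finset V, ∀ e ∈ blockEdges.parts,
      f e ∈ blockEdges.parts ∧ f (f e) = e ∧ f e ≠ e ∧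
      ∃ eN ∈ nameEdges.parts, ∃ v ∈ e, ∃ w ∈ f e, v ∈ eN ∧ w ∈ eN

namespace DKaux

variable {V : Type} [Fintype V] [DecidableEq V]

def fib (f : V → ℕ) (i : ℕ) : Finset V := Finset.univ.filter (fun v => f v = i)

lemma mem_fib (f : V → ℕ) (i : ℕ) (v : V) : v ∈ fib f i ↔ f v = i := by simp [fib]

def part (f : V → ℕ) : Finpartition (Finset.univ : Finset V) where
  parts := (Finset.univ.image f).image (fib f)
  supIndep := by
    rw [Finset.supIndep_iff_pairwiseDisjoint]
    intro a ha b hb hab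
    simp only [Finset.coe_image, Set.mem_image, Finset.mem_coe] at ha hb
    obtain ⟨i, -, rfl⟩ := ha
    obtain ⟨j, -, rfl⟩ := hb
    refine Finset.disjoint_left.2 fun v hv hw => hab ?_
    simp only [id, mem_fib] at hv hw
    rw [← hv, ← hw]
  sup_parts := by
    ext v
    simp only [Finset.mem_sup, Finset.mem_univ, iff_true]
    exact ⟨fib f (f v), by simp, by simp [mem_fib]⟩
  bot_notMem := by
    intro h
    simp only [Finset.mem_image, Finset.mem_univ, true_and] at h
    obtain ⟨i, ⟨v, rfl⟩, h⟩ := h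
    have : v ∈ fib f (f v) := by simp [mem_fib]
    rw [h] at this
    simp at this

lemma mem_part (f : V → ℕ) (e : Finset V) :
    e ∈ (part f).parts ↔ ∃ v, e = fib f (f v) := by
  simp only [part, Finset.mem_image, Finset.mem_univ, true_and]
  constructor
  · rintro ⟨_, ⟨v, rfl⟩, rfl⟩; exact ⟨v, rfl⟩
  · rintro ⟨v, rfl⟩; exact ⟨_, ⟨v, rfl⟩, rfl⟩

lemma card_part (f : V → ℕ) : (part f).parts.card = (Finset.univ.image f).card := by
  apply Finset.card_image_of_injOn
  intro i hi j hj h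
  simp only [Finset.coe_image, Set.mem_image, Finset.mem_coe] at hi
  obtain ⟨v, -, rfl⟩ := hi
  have : v ∈ fib f (f v) := by simp [mem_fib]
  rw [h, mem_fib] at this
  exact this

lemma chain (P : Finset (Finset V)) (hP : ∀ v, ∃ e ∈ P, v ∈ e) (v w : V)
    (h : Relation.ReflTransGen (fun v w => ∃ e ∈ P, v ∈ e ∧ w ∈ e) v w) :
    ∃ (n : ℕ) (e : Fin (n + 1) → Finset V),
      (∀ i, e i ∈ P) ∧ v ∈ e 0 ∧ w ∈ e (Fin.last n) ∧
      ∀ i : Fin n, ((e i.castSucc) ∩ (e i.succ)).Nonempty := by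
  induction h using Relation.ReflTransGen.head_induction_on with
  | refl =>
    obtain ⟨e, he, hv⟩ := hP w
    exact ⟨0, fun _ => e, fun _ => he, hv, hv, fun i => i.elim0⟩
  | head h1 _ ih =>
    obtain ⟨e0, he0, ha, hc⟩ := h1
    obtain ⟨n, e, h1, h2, h3, h4⟩ := ih
    refine ⟨n + 1, Fin.cons e0 e, ?_, by simpa using ha, ?_, ?_⟩
    · intro i
      refine Fin.cases ?_ (fun j => ?_) i
      · simpa using he0
      · simpa using h1 j
    · rw [← Fin.succ_last]; simpa using h3
    · intro i
      refine Fin.cases ?_ (fun j => ?_) i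
      · refine ⟨_, Finset.mem_inter.2 ⟨by simpa using hc, by simpa using h2⟩⟩
      · rw [← Fin.succ_castSucc]; simpa using h4 j

def rep (D B r1 r2 p : ℕ) : ℕ :=
  if p ≤ 1 + r1 then 0 else if B * D - 1 - r2 ≤ p then B * D - 1 - r2
  else if D ∣ p then p - 1 else p

def blk (D B : ℕ) (v : Fin (B * D)) : ℕ := v.1 / D
def nam (D B r1 r2 : ℕ) (v : Fin (B * D)) : ℕ := rep D B r1 r2 v.1
def sw (i : ℕ) : ℕ := if i % 2 = 0 then i + 1 else i - 1

lemma sw_sw (i : ℕ) : sw (sw i) = i := by unfold sw; split_ifs <;> omega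
lemma sw_ne (i : ℕ) : sw i ≠ i := by unfold sw; split_ifs <;> omega
lemma sw_lt (i m : ℕ) (h : i < 2 * m) : sw i < 2 * m := by unfold sw; split_ifs <;> omega

/-- boundary vertices share names -/
lemma rep_bd (D B r1 r2 i : ℕ) (hD : 3 ≤ D) (h1 : r1 + 3 ≤ D) (h2 : r2 + 2 ≤ D)
    (hi : i + 1 < B) : rep D B r1 r2 ((i+1) * D - 1) = rep D B r1 r2 ((i+1) * D) := by
  have e1 : (i+1) * D + D ≤ B * D := by nlinarith
  have e2 : D ≤ (i+1) * D := by nlinarith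
  have e3 : ¬ D ∣ (i+1) * D - 1 := by
    intro h
    have := (Nat.dvd_sub (Dvd.intro_left (i+1) rfl) h : D ∣ (i+1) * D - ((i+1)*D - 1))
    have h' : (i+1) * D - ((i+1)*D - 1) = 1 := by omega
    rw [h'] at this
    have := Nat.le_of_dvd one_pos this
    omega
  have e4 : D ∣ (i+1) * D := Dvd.intro_left (i+1) rfl
  generalize (i+1) * D = x at *
  unfold rep
  rw [if_neg (by omega), if_neg (by omega), if_neg e3, if_neg (by omega), if_neg (by omega),
    if_pos e4]

lemma card_blk (D B : ℕ) (hD : 3 ≤ D) (i : ℕ) (hi : i < B) : (fib (blk D B) i).card = D := by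
  have e1 : i * D + D ≤ B * D := by nlinarith
  have : (fib (blk D B) i).map Fin.valEmbedding = Finset.Ico (i * D) (i * D + D) := by
    ext p
    simp only [Finset.mem_map, mem_fib, blk, Fin.valEmbedding_apply, Finset.mem_Ico]
    have key : p / D = i ↔ i * D ≤ p ∧ p < i * D + D := by
      rw [Nat.div_eq_iff (by omega)]; omega
    constructor
    · rintro ⟨v, h, rfl⟩; exact key.1 h
    · intro h; exact ⟨⟨p, by omega⟩, key.2 h, rfl⟩
  rw [← Finset.card_map Fin.valEmbedding, this]; simp

lemma image_blk (D B : ℕ) (hD : 3 ≤ D) : Finset.univ.image (blk D B) = Finset.range B := by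
  ext i
  simp only [Finset.mem_image, Finset.mem_univ, true_and, Finset.mem_range]
  constructor
  · rintro ⟨v, rfl⟩; exact Nat.div_lt_of_lt_mul (lt_of_lt_of_eq v.2 (mul_comm _ _))
  · intro h
    exact ⟨⟨i * D, by nlinarith⟩, by simp only [blk]; exact Nat.mul_div_cancel _ (by omega)⟩

lemma mem_blk (D B : ℕ) (hD : 3 ≤ D) (e) : e ∈ (part (blk D B)).parts ↔
    ∃ i < B, e = fib (blk D B) i := by
  simp only [part, image_blk D B hD, Finset.mem_image, Finset.mem_range]
  simp only [eq_comm]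

lemma card_nam_le (D B r1 r2 : ℕ) (hD : 3 ≤ D) (h1 : r1 + 3 ≤ D) (h2 : r2 + 2 ≤ D)
    (v : Fin (B * D)) : (fib (nam D B r1 r2) (nam D B r1 r2 v)).card < D := by
  generalize hx : nam D B r1 r2 v = x
  have hB : 0 < B * D := by have := v.2; omega
  have hBD : D ≤ B * D := by
    have : 0 < B := Nat.pos_of_mul_pos_right hB
    nlinarith
  rw [← Finset.card_map Fin.valEmbedding]
  have hsub : ∃ s : Finset ℕ, s.card < D ∧ ∀ p < B * D, rep D B r1 r2 p = x → p ∈ s := by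
    by_cases hx0 : x = 0
    · refine ⟨Finset.Icc 0 (1 + r1), by simp; omega, fun p hp h => ?_⟩
      simp only [Finset.mem_Icc]
      unfold rep at h
      split_ifs at h <;> omega
    by_cases hx1 : B * D - 1 - r2 ≤ x
    · refine ⟨Finset.Icc (B * D - 1 - r2) (B * D - 1), by simp; omega, fun p hp h => ?_⟩
      simp only [Finset.mem_Icc]
      unfold rep at h
      split_ifs at h <;> omega
    · refine ⟨Finset.Icc x (x+1), by simp; omega, fun p hp h => ?_⟩
      simp only [Finset.mem_Icc]
      unfold rep at h
      split_ifs at h <;> omega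
  obtain ⟨s, hs, hs'⟩ := hsub
  refine lt_of_le_of_lt (Finset.card_le_card ?_) hs
  intro p hp
  simp only [Finset.mem_map, mem_fib, Fin.valEmbedding_apply] at hp
  obtain ⟨w, hw, rfl⟩ := hp
  exact hs' _ w.2 hw

lemma card_nam (D B r1 r2 : ℕ) (hD : 3 ≤ D) (h1 : r1 + 3 ≤ D) (h2 : r2 + 2 ≤ D) (hB : 2 ≤ B) :
    (Finset.univ.image (nam D B r1 r2)).card + (r1 + r2 + B) = B * D := by
  have hBD : 2 * D ≤ B * D := by nlinarith
  obtain ⟨C, rfl⟩ : ∃ C, B = C + 1 := ⟨B - 1, by omega⟩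
  set N := (C + 1) * D with hN
  have hN' : N = C * D + D := by rw [hN]; ring
  let A1 := Finset.Icc 1 (1 + r1)
  let A2 := Finset.Ico (N - r2) N
  let A3 := (Finset.range C).image (fun i => (i + 1) * D)
  have c3 : A3.card = C := by
    rw [Finset.card_image_of_injective, Finset.card_range]
    intro a b h
    have := Nat.eq_of_mul_eq_mul_right (by omega) h
    omega
  have m3 : ∀ p, p ∈ A3 → D ∣ p ∧ D ≤ p ∧ p + D ≤ N := by
    intro p hp
    simp only [A3, Finset.mem_image, Finset.mem_range] at hp
    obtain ⟨i, hi, rfl⟩ := hp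
    refine ⟨Dvd.intro_left _ rfl, by nlinarith, by rw [hN']; nlinarith⟩
  have m3' : ∀ p, 0 < p → p < N → D ∣ p → p ∈ A3 := by
    rintro p h0 hp ⟨k, rfl⟩
    simp only [A3, Finset.mem_image, Finset.mem_range]
    have hk : 0 < k := Nat.pos_of_mul_pos_left h0
    have hk2 : k < C + 1 := by
      by_contra hh
      push Not at hh
      nlinarith
    exact ⟨k - 1, by omega, by rw [Nat.sub_add_cancel hk, mul_comm]⟩
  have d12 : Disjoint A1 A2 := by
    rw [Finset.disjoint_left]; intro p hp hq
    simp only [A1, A2, Finset.mem_Icc, Finset.mem_Ico] at hp hq; omega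
  have d123 : Disjoint (A1 ∪ A2) A3 := by
    rw [Finset.disjoint_left]; intro p hp hq
    have := m3 p hq
    simp only [A1, A2, Finset.mem_Icc, Finset.mem_Ico, Finset.mem_union] at hp; omega
  have hcard : (A1 ∪ A2 ∪ A3).card = 1 + r1 + r2 + C := by
    rw [Finset.card_union_of_disjoint d123, Finset.card_union_of_disjoint d12, c3]
    simp only [A1, A2, Nat.card_Icc, Nat.card_Ico]; omega
  have hsub : A1 ∪ A2 ∪ A3 ⊆ Finset.range N := by
    intro p hp
    simp only [Finset.mem_union] at hp
    rw [Finset.mem_range]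
    rcases hp with (hp | hp) | hp
    · simp only [A1, Finset.mem_Icc] at hp; omega
    · simp only [A2, Finset.mem_Ico] at hp; omega
    · have := m3 p hp; omega
  have him : Finset.univ.image (nam D (C+1) r1 r2) = Finset.range N \ (A1 ∪ A2 ∪ A3) := by
    ext p
    simp only [Finset.mem_image, Finset.mem_univ, true_and, Finset.mem_sdiff, Finset.mem_range,
      Finset.mem_union, not_or]
    constructor
    · rintro ⟨v, rfl⟩
      have hv : v.1 < N := v.2
      have hdv : ∀ q, D ∣ q → D ∣ q + 1 → False := by
        intro q ha hb
        have := Nat.le_of_dvd one_pos ((Nat.dvd_add_right ha).1 hb)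
        omega
      have hbd : ∀ q, D ∣ q → q < N → q + D ≤ N := by
        intro q ha hb
        rcases Nat.eq_zero_or_pos q with rfl | h0
        · omega
        · exact (m3 q (m3' q h0 hb ha)).2.2
      have hDle : ∀ q, D ∣ q → 0 < q → D ≤ q := fun q a b => Nat.le_of_dvd b a
      unfold nam
      generalize v.1 = q at hv
      unfold rep
      rw [← hN]
      simp only [A1, A2, Finset.mem_Icc, Finset.mem_Ico]
      split_ifs with a1 a2 a3
      · refine ⟨by omega, ⟨by omega, by omega⟩, fun h => ?_⟩
        have := m3 _ h; omega
      · refine ⟨by omega, ⟨by omega, by omega⟩, fun h => ?_⟩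
        have := m3 _ h; omega
      · have := hDle _ a3 (by omega)
        refine ⟨by omega, ⟨by omega, by omega⟩, fun h => ?_⟩
        refine hdv _ (m3 _ h).1 ?_
        rwa [Nat.sub_add_cancel (by omega)]
      · refine ⟨by omega, ⟨by omega, by omega⟩, fun h => ?_⟩
        exact a3 (m3 _ h).1
    · rintro ⟨hp, ⟨ha, hb⟩, hc⟩
      refine ⟨⟨p, hp⟩, ?_⟩
      simp only [A1, A2, Finset.mem_Icc, Finset.mem_Ico] at ha hb
      show rep D (C+1) r1 r2 p = p
      unfold rep
      rw [← hN]
      split_ifs with a1 a2 a3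
      · omega
      · omega
      · exact absurd (m3' p (by omega) hp a3) hc
      · rfl
  rw [him, Finset.card_sdiff_of_subset hsub, hcard, Finset.card_range]
  have := Finset.card_le_card hsub
  rw [hcard, Finset.card_range] at this
  omega

lemma conn (D B r1 r2 : ℕ) (hD : 3 ≤ D) (h1 : r1 + 3 ≤ D) (h2 : r2 + 2 ≤ D)
    (v w : Fin (B * D)) :
    Relation.ReflTransGen (fun v w => ∃ e ∈ (part (blk D B)).parts ∪ (part (nam D B r1 r2)).parts,
      v ∈ e ∧ w ∈ e) v w := by
  set R : Fin (B * D) → Fin (B * D) → Prop := fun v w =>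
    ∃ e ∈ (part (blk D B)).parts ∪ (part (nam D B r1 r2)).parts, v ∈ e ∧ w ∈ e with hR
  have hsymm : Symmetric R := by
    rintro a b ⟨e, he, ha, hb⟩; exact ⟨e, he, hb, ha⟩
  have hB : 0 < B * D := by have := v.2; omega
  have key : ∀ p (hp : p < B * D), Relation.ReflTransGen R ⟨0, hB⟩ ⟨p, hp⟩ := by
    intro p
    induction p with
    | zero => intro hp; exact Relation.ReflTransGen.refl
    | succ p ih =>
      intro hp
      refine (ih (by omega)).tail ?_
      by_cases hd : D ∣ p + 1
      · refine ⟨fib (nam D B r1 r2) (nam D B r1 r2 ⟨p, by omega⟩),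
          Finset.mem_union_right _ ((mem_part _ _).2 ⟨_, rfl⟩), by simp [mem_fib], ?_⟩
        rw [mem_fib]
        obtain ⟨k, hk⟩ := hd
        obtain ⟨i, rfl⟩ : ∃ i, k = i + 1 := ⟨k - 1, by
          have : k ≠ 0 := by rintro rfl; simp at hk
          omega⟩
        have hi : i + 1 < B := by
          by_contra hh
          push Not at hh
          nlinarith
        have := rep_bd D B r1 r2 i hD h1 h2 hi
        rw [mul_comm, ← hk] at this
        simp only [nam]
        exact this.symm
      · refine ⟨fib (blk D B) (blk D B ⟨p, by omega⟩),
          Finset.mem_union_left _ ((mem_part _ _).2 ⟨_, rfl⟩), by simp [mem_fib], ?_⟩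
        rw [mem_fib]
        simp only [blk]
        rw [Nat.succ_div, if_neg hd]; rfl
  have hs : Symmetric (Relation.ReflTransGen R) := by
    intro a b h
    induction h with
    | refl => exact Relation.ReflTransGen.refl
    | tail _ h ih => exact Relation.ReflTransGen.head (hsymm h) ih
  exact (hs (key v.1 v.2)).trans (key w.1 w.2)

open Classical in
noncomputable def pf (D B : ℕ) (e : Finset (Fin (B * D))) : Finset (Fin (B * D)) :=
  if h : e.Nonempty then fib (blk D B) (sw (blk D B h.choose)) else e

lemma pf_blk (D B : ℕ) (hD : 3 ≤ D) (i : ℕ) (hi : i < B) :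
    pf D B (fib (blk D B) i) = fib (blk D B) (sw i) := by
  have h : (fib (blk D B) i).Nonempty := by
    rw [← Finset.card_pos, card_blk D B hD i hi]; omega
  unfold pf
  rw [dif_pos h, (mem_fib _ _ _).1 h.choose_spec]

lemma pair_name (D m r1 r2 : ℕ) (hD : 3 ≤ D) (h1 : r1 + 3 ≤ D) (h2 : r2 + 2 ≤ D)
    (i : ℕ) (hi : i + 1 < m) :
    ∃ v w : Fin (m * D), blk D m v = i ∧ blk D m w = i + 1 ∧
      nam D m r1 r2 v = nam D m r1 r2 w := by
  have e1 : (i+1) * D + D ≤ m * D := by nlinarith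
  have e2 : D ≤ (i+1) * D := by nlinarith
  refine ⟨⟨(i+1) * D - 1, by omega⟩, ⟨(i+1)*D, by omega⟩, ?_, ?_, rep_bd D m r1 r2 i hD h1 h2 hi⟩
  · simp only [blk]
    rw [Nat.div_eq_iff (by omega)]
    have : (i+1) * D = i * D + D := by ring
    omega
  · simp only [blk]; exact Nat.mul_div_cancel _ (by omega)

lemma pair_name2 (D m r1 r2 : ℕ) (hD : 3 ≤ D) (h1 : r1 + 3 ≤ D) (h2 : r2 + 2 ≤ D)
    (i : ℕ) (hi : i < 2 * m) :
    ∃ v w : Fin (2 * m * D), blk D (2 * m) v = i ∧ blk D (2 * m) w = sw i ∧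
      nam D (2 * m) r1 r2 v = nam D (2 * m) r1 r2 w := by
  unfold sw
  split_ifs with h
  · exact pair_name D (2 * m) r1 r2 hD h1 h2 i (by omega)
  · obtain ⟨v, w, a, b, c⟩ := pair_name D (2 * m) r1 r2 hD h1 h2 (i - 1) (by omega)
    exact ⟨w, v, by omega, a, c.symm⟩

noncomputable def hyp (D K m r1 r2 : ℕ) (hD : 3 ≤ D) (h1 : r1 + 3 ≤ D) (h2 : r2 + 2 ≤ D)
    (hm : 1 ≤ m) (hK : 2 * m * D = 2 * m + K + (r1 + r2 + 2 * m)) :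
    DKPairedHypergraph D K (Fin (2 * m * D)) where
  blockEdges := part (blk D (2 * m))
  nameEdges := part (nam D (2 * m) r1 r2)
  block_card := by
    intro e he
    obtain ⟨i, hi, rfl⟩ := (mem_blk _ _ hD _).1 he
    exact card_blk _ _ hD i hi
  name_card := by
    intro e he
    obtain ⟨v, rfl⟩ := (mem_part _ _).1 he
    exact card_nam_le _ _ _ _ hD h1 h2 v
  count_diff := by
    rw [card_part, card_part, image_blk _ _ hD, Finset.card_range]
    have := card_nam D (2 * m) r1 r2 hD h1 h2 (by omega)
    omega
  connected := fun v w => chain _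
    (fun v => ⟨_, Finset.mem_union_left _ ((mem_part _ _).2 ⟨v, rfl⟩), by simp [mem_fib]⟩) v w
    (conn D (2 * m) r1 r2 hD h1 h2 v w)
  share := by
    have hn : 2 * D ≤ 2 * m * D := by nlinarith
    let a : Fin (2 * m * D) := ⟨0, by omega⟩
    let b : Fin (2 * m * D) := ⟨1, by omega⟩
    refine ⟨_, (mem_part _ _).2 ⟨a, rfl⟩, _, (mem_part _ _).2 ⟨a, rfl⟩, ?_⟩
    have hab : a ≠ b := by simp [a, b, Fin.ext_iff]
    refine le_trans (Finset.card_pair hab).ge (Finset.card_le_card ?_)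
    intro x hx
    simp only [Finset.mem_insert, Finset.mem_singleton] at hx
    rw [Finset.mem_inter, mem_fib, mem_fib]
    rcases hx with rfl | rfl
    · exact ⟨rfl, rfl⟩
    · constructor
      · simp [nam, rep, a, b]
      · simp only [blk, a, b]
        rw [Nat.div_eq_of_lt (by omega), Nat.div_eq_of_lt (by omega)]
  paired := by
    refine ⟨pf D (2 * m), fun e he => ?_⟩
    obtain ⟨i, hi, rfl⟩ := (mem_blk _ _ hD _).1 he
    have hs := sw_lt i m hi
    rw [pf_blk _ _ hD i hi, pf_blk _ _ hD _ hs, sw_sw]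
    obtain ⟨v, w, hv, hw, hn⟩ := pair_name2 D m r1 r2 hD h1 h2 i hi
    refine ⟨(mem_blk _ _ hD _).2 ⟨_, hs, rfl⟩, rfl, ?_, _, (mem_part _ _).2 ⟨v, rfl⟩, v,
      (mem_fib _ _ _).2 hv, w, (mem_fib _ _ _).2 hw, by simp [mem_fib], by simp [mem_fib, hn]⟩
    intro h
    have hv' := (mem_fib _ _ _).2 hv
    rw [← h, mem_fib, hv] at hv'
    exact sw_ne i hv'.symm

end DKaux

/-- For every odd `D ≥ 3` and every `K ≥ 1` there is a `(D,K)`-paired-hypergraph with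
exactly `2⌈K/(2(D-2))⌉` block edges. -/
theorem exists_DK_paired_hypergraph (D K : ℕ) (hD : 3 ≤ D) (hDodd : Odd D) (hK : 1 ≤ K) :
    ∃ (n : ℕ) (H : DKPairedHypergraph D K (Fin n)),
      H.blockEdges.parts.card = 2 * ⌈(K : ℚ) / (2 * ((D : ℚ) - 2))⌉₊ := by
  obtain ⟨d, rfl⟩ : ∃ d, D = d + 3 := ⟨D - 3, by omega⟩
  set m := ⌈(K : ℚ) / (2 * (((d + 3 : ℕ) : ℚ) - 2))⌉₊ with hm
  have hpos : (0 : ℚ) < 2 * (((d + 3 : ℕ) : ℚ) - 2) := by push_cast; linarith [(Nat.cast_nonneg d : (0:ℚ) ≤ d)]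
  have hKq : (0 : ℚ) < K := by exact_mod_cast hK
  have hq : 0 < (K : ℚ) / (2 * (((d + 3 : ℕ) : ℚ) - 2)) := div_pos hKq hpos
  have hm1 : 1 ≤ m := Nat.ceil_pos.2 hq
  have hle := Nat.le_ceil ((K : ℚ) / (2 * (((d + 3 : ℕ) : ℚ) - 2)))
  have hlt := Nat.ceil_lt_add_one hq.le
  rw [← hm] at hle hlt
  rw [div_le_iff₀ hpos] at hle
  rw [← sub_lt_iff_lt_add, lt_div_iff₀ hpos] at hlt
  have hle' : K ≤ m * (2 * (d + 1)) := by
    have : (K : ℚ) ≤ ((m * (2 * (d + 1)) : ℕ) : ℚ) := by push_cast at hle ⊢; linarith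
    exact_mod_cast this
  have hlt' : m * (2 * (d + 1)) < K + 2 * (d + 1) := by
    have : ((m * (2 * (d + 1)) : ℕ) : ℚ) < ((K + 2 * (d + 1) : ℕ) : ℚ) := by
      push_cast at hlt ⊢; linarith
    exact_mod_cast this
  obtain ⟨r, hr⟩ := Nat.exists_eq_add_of_le hle'
  have e : 2 * m * (d + 3) = m * (2 * (d + 1)) + 4 * m := by ring
  refine ⟨2 * m * (d + 3), DKaux.hyp (d + 3) K m (min r d) (r - min r d) hD (by omega) (by omega)
    hm1 (by omega), ?_⟩
  simp only [DKaux.hyp]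
  rw [DKaux.card_part, DKaux.image_blk _ _ hD, Finset.card_range]
end

section
/- Let m ≥ 1 and let ν be the partition with m rows whose first row has length 4m and whose remaining m−1 rows each have length 2m (i.e., ν = (2m) + (m × 2m)). Then there is exactly one semistandard Young tableau of shape ν with entries in {1,…,m} in which every entry i ∈ {1,…,m} occurs exactly 2m+2 times. -/
open scoped BigOperators

/-- The partition `ν = (2m) + (m × 2m)`: `m` rows, first row of length `4m`,
all other rows of length `2m`. -/
def nuShape (m : ℕ) : Fin m → ℕ := fun r => if (r : ℕ) = 0 then 4 * m else 2 * m

theorem mono_eq_of_card {n m : ℕ} (f g : Fin n → Fin m) (hf : Monotone f) (hg : Monotone g)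
    (h : ∀ i, (Finset.univ.filter (fun c => f c = i)).card
      = (Finset.univ.filter (fun c => g c = i)).card) : f = g := by
  have hp : (List.ofFn f).Perm (List.ofFn g) := by
    rw [List.perm_iff_count]
    intro i
    have key : ∀ f : Fin n → Fin m, (List.ofFn f).count i
        = (Finset.univ.filter (fun c => f c = i)).card := by
      intro f
      rw [← Multiset.coe_count, ← Fin.univ_val_map, Multiset.count_map]
      simp only [Finset.card, Finset.filter_val, eq_comm]
    rw [key, key, h]
  have := hp.eq_of_sortedLE hf.sortedLE_ofFn hg.sortedLE_ofFn
  exact List.ofFn_injective this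

theorem nuShape_ge (m : ℕ) (r : Fin m) : 2 * m ≤ nuShape m r := by
  unfold nuShape; split_ifs <;> omega

theorem nu_forced (m : ℕ) (T : (r : Fin m) → Fin (nuShape m r) → Fin m)
    (h2 : ∀ r r' : Fin m, r < r' → ∀ (c : ℕ) (h : c < nuShape m r) (h' : c < nuShape m r'),
          T r ⟨c, h⟩ < T r' ⟨c, h'⟩) (r : Fin m) (c : ℕ) (h : c < nuShape m r) (hc : c < 2 * m) :
    T r ⟨c, h⟩ = r := by
  have hs : StrictMono (fun r : Fin m => T r ⟨c, lt_of_lt_of_le hc (nuShape_ge m r)⟩) :=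
    fun a b hab => h2 a b hab c _ _
  exact le_antisymm (hs.apply_le (x := r)) (hs.le_apply (x := r))

def nuT (m : ℕ) : (r : Fin m) → Fin (nuShape m r) → Fin m := fun r c =>
  if h : (c : ℕ) < 2 * m then r else ⟨((c : ℕ) - 2 * m) / 2, by
    have := c.2
    have h4 : nuShape m r ≤ 4 * m := by unfold nuShape; split_ifs <;> omega
    omega⟩

theorem nuT_row (m : ℕ) (r i : Fin m) :
    ((Finset.univ : Finset (Fin (nuShape m r))).filter (fun c => nuT m r c = i)).card
      = (if r = i then 2 * m else 0) + (if (r : ℕ) = 0 then 2 else 0) := by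
  have e : ((Finset.univ : Finset (Fin (nuShape m r))).filter (fun c => nuT m r c = i)).card
      = ((Finset.range (nuShape m r)).filter
        (fun c => (if c < 2 * m then (r : ℕ) else (c - 2 * m) / 2) = i)).card := by
    rw [← Finset.card_map Fin.valEmbedding]
    congr 1
    ext c
    simp only [Finset.mem_map, Finset.mem_filter, Finset.mem_univ, true_and, Finset.mem_range,
      Fin.valEmbedding_apply, nuT, Fin.ext_iff]
    constructor
    · rintro ⟨a, ha, rfl⟩
      refine ⟨a.2, ?_⟩
      rw [← ha]
      split_ifs <;> rfl
    · rintro ⟨hc, h⟩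
      refine ⟨⟨c, hc⟩, ?_, rfl⟩
      rw [← h]
      simp only []
      split_ifs <;> rfl
  have hi := i.2
  rw [e]
  by_cases hr : (r : ℕ) = 0
  · have hn : nuShape m r = 4 * m := by simp [nuShape, hr]
    rw [hn]
    by_cases hri : r = i
    · have hi0 : (i : ℕ) = 0 := by rw [← hri]; exact hr
      have : (Finset.range (4 * m)).filter
        (fun c => (if c < 2 * m then (r : ℕ) else (c - 2 * m) / 2) = i)
          = Finset.range (2 * m + 2) := by
        ext c
        simp only [Finset.mem_filter, Finset.mem_range, hr, hi0]
        split_ifs <;> omega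
      rw [this]; simp [hri, hi0]
    · have hi0 : (i : ℕ) ≠ 0 := fun h => hri (Fin.ext (by omega))
      have : (Finset.range (4 * m)).filter
        (fun c => (if c < 2 * m then (r : ℕ) else (c - 2 * m) / 2) = i)
          = Finset.Ico (2 * m + 2 * i) (2 * m + 2 * i + 2) := by
        ext c
        simp only [Finset.mem_filter, Finset.mem_range, hr, Finset.mem_Ico]
        split_ifs <;> omega
      rw [this]; simp [hri, hr]
  · have hn : nuShape m r = 2 * m := by simp [nuShape, hr]
    rw [hn]
    have : (Finset.range (2 * m)).filter
        (fun c => (if c < 2 * m then (r : ℕ) else (c - 2 * m) / 2) = i)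
          = if r = i then Finset.range (2 * m) else ∅ := by
      ext c
      by_cases hri : r = i
      · simp +contextual [hri]
      · have : (r : ℕ) ≠ i := fun h => hri (Fin.ext h)
        simp only [hri, Finset.mem_filter, Finset.mem_range, if_false]
        simp +contextual [this]
    rw [this]; split_ifs <;> simp

/-- There is exactly one semistandard Young tableau of shape `ν = (2m) + (m × 2m)` with
entries in `{1,…,m}` in which every entry occurs exactly `2m+2` times. -/
theorem unique_ssyt_nu (m : ℕ) (hm : 1 ≤ m) :
    ∃! T : (r : Fin m) → Fin (nuShape m r) → Fin m,
      (∀ r : Fin m, Monotone (T r)) ∧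
      (∀ r r' : Fin m, r < r' → ∀ (c : ℕ) (h : c < nuShape m r) (h' : c < nuShape m r'),
          T r ⟨c, h⟩ < T r' ⟨c, h'⟩) ∧
      (∀ i : Fin m, tabCount (nuShape m) T i = 2 * m + 2) := by
  have z : ∀ r : Fin m, (r : ℕ) = 0 ↔ r = ⟨0, hm⟩ := fun r => by simp [Fin.ext_iff]
  have n0 : ∀ r : Fin m, r ≠ ⟨0, hm⟩ → nuShape m r = 2 * m := fun r hr => by
    rw [nuShape, if_neg (fun h => hr ((z r).1 h))]
  have P : (∀ r : Fin m, Monotone (nuT m r)) ∧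
      (∀ r r' : Fin m, r < r' → ∀ (c : ℕ) (h : c < nuShape m r) (h' : c < nuShape m r'),
          nuT m r ⟨c, h⟩ < nuT m r' ⟨c, h'⟩) ∧
      (∀ i : Fin m, tabCount (nuShape m) (nuT m) i = 2 * m + 2) := by
    refine ⟨?_, ?_, ?_⟩
    · intro r a b hab
      have hab' : (a : ℕ) ≤ b := hab
      by_cases hr : r = ⟨0, hm⟩
      · have hr0 := (z r).2 hr
        simp only [nuT, Fin.le_def]
        split_ifs <;> (try simp only [Fin.val_mk]) <;> (try dsimp) <;> omega
      · have ha := a.2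
        have hb := b.2
        have hn := n0 r hr
        simp only [nuT]
        rw [dif_pos (by omega), dif_pos (by omega)]
    · intro r r' hr c h h'
      have hr' : (r : ℕ) < r' := hr
      have hn := n0 r' (fun h => by rw [← z] at h; omega)
      simp only [nuT]
      rw [dif_pos (by omega), dif_pos (by omega)]
      exact hr
    · intro i
      simp only [tabCount, nuT_row, z, Finset.sum_add_distrib]
      simp
  refine ⟨nuT m, P, ?_⟩
  rintro T ⟨h1, h2, h3⟩
  have agree : ∀ r, r ≠ ⟨0, hm⟩ → T r = nuT m r := by
    intro r hr
    funext c
    have hc : (c : ℕ) < 2 * m := by rw [← n0 r hr]; exact c.2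
    exact (nu_forced m T h2 r c c.2 hc).trans (nu_forced m _ P.2.1 r c c.2 hc).symm
  funext r
  by_cases hr : r = ⟨0, hm⟩
  · subst hr
    apply mono_eq_of_card _ _ (h1 _) (P.1 _)
    intro i
    have a := h3 i
    rw [← P.2.2 i, tabCount, tabCount, ← Finset.add_sum_erase _ _ (Finset.mem_univ ⟨0, hm⟩),
      ← Finset.add_sum_erase _ _ (Finset.mem_univ ⟨0, hm⟩)] at a
    have b : ∀ r ∈ Finset.univ.erase (⟨0, hm⟩ : Fin m),
        ((Finset.univ : Finset (Fin (nuShape m r))).filter (fun c => T r c = i)).card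
        = ((Finset.univ : Finset (Fin (nuShape m r))).filter (fun c => nuT m r c = i)).card := by
      intro r hr
      rw [agree r (Finset.ne_of_mem_erase hr)]
    rw [Finset.sum_congr rfl b] at a
    exact Nat.add_right_cancel a
  · exact agree r hr
end

section
/- Let D ≥ 4 be even, m ≥ 1, and d ≥ 1. For a partition ρ = (ρ_1 ≥ … ≥ ρ_m ≥ 0) of d with at most m parts, set e_ρ := Σ_{i=1}^{m} ⌈ρ_i/(D−2)⌉. Then the maximum of e_ρ over all partitions ρ of d with at most m parts equals d if d ≤ m, and equals m + ⌊(d−m)/(D−2)⌋ if d ≥ m. -/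
open scoped BigOperators

theorem ceil_aux (D a : ℕ) (hD : 4 ≤ D) :
    ⌈(a : ℚ) / ((D : ℚ) - 2)⌉₊ = (a + (D - 2) - 1) / (D - 2) := by
  obtain ⟨k, rfl⟩ : ∃ k, D = k + 2 := ⟨D - 2, by omega⟩
  have hk : 2 ≤ k := by omega
  have hkq : (0 : ℚ) < k := by exact_mod_cast (by omega : 0 < k)
  have e : ((k + 2 : ℕ) : ℚ) - 2 = k := by push_cast; ring
  rw [e, Nat.add_sub_cancel]
  apply eq_of_forall_ge_iff
  intro c
  rw [Nat.ceil_le, div_le_iff₀ hkq, ← Nat.lt_succ_iff, Nat.div_lt_iff_lt_mul (by omega),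
    Nat.succ_mul]
  have : (a : ℚ) ≤ c * k ↔ a ≤ c * k := by exact_mod_cast Iff.rfl
  rw [this]
  omega

/-- Let `D ≥ 4` be even, `m ≥ 1`, `d ≥ 1`.  For a partition `ρ` of `d` with at most `m`
parts set `e_ρ := Σ_i ⌈ρ_i/(D−2)⌉`.  The maximum of `e_ρ` over all such partitions is
`d` if `d ≤ m`, and `m + ⌊(d−m)/(D−2)⌋` if `d ≥ m`. -/
theorem max_erho_even (D m d : ℕ) (hD : 4 ≤ D) (hDeven : Even D) (hm : 1 ≤ m)
    (hd : 1 ≤ d) :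
    (d ≤ m → IsGreatest
      {e : ℕ | ∃ ρ : Fin m → ℕ, (∀ i j : Fin m, i ≤ j → ρ j ≤ ρ i) ∧ (∑ i, ρ i = d) ∧
        e = ∑ i, ⌈(ρ i : ℚ) / ((D : ℚ) - 2)⌉₊} d) ∧
    (m ≤ d → IsGreatest
      {e : ℕ | ∃ ρ : Fin m → ℕ, (∀ i j : Fin m, i ≤ j → ρ j ≤ ρ i) ∧ (∑ i, ρ i = d) ∧
        e = ∑ i, ⌈(ρ i : ℚ) / ((D : ℚ) - 2)⌉₊} (m + (d - m) / (D - 2))) := by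
  simp only [ceil_aux D _ hD]
  obtain ⟨k, rfl⟩ : ∃ k, D = k + 2 := ⟨D - 2, by omega⟩
  have hk : 2 ≤ k := by omega
  simp only [Nat.add_sub_cancel]
  have h1 : (1 + k - 1) / k = 1 := by
    rw [Nat.add_sub_cancel_left]; exact Nat.div_self (by omega)
  have h0 : (0 + k - 1) / k = 0 := Nat.div_eq_of_lt (by omega)
  constructor
  · intro hdm
    constructor
    · have hs : ∑ i : Fin m, (if (i : ℕ) < d then 1 else 0) = d := by
        rw [Fin.sum_univ_eq_sum_range (fun i => if i < d then 1 else 0) m,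
          ← Finset.sum_filter, ← Finset.card_eq_sum_ones]
        have : (Finset.range m).filter (fun i => i < d) = Finset.range d := by
          ext x; simp; omega
        rw [this, Finset.card_range]
      refine ⟨fun i => if (i : ℕ) < d then 1 else 0, ?_, hs, ?_⟩
      · intro i j hij
        have : (i : ℕ) ≤ j := hij
        dsimp only
        split_ifs <;> omega
      · conv_lhs => rw [← hs]
        apply Finset.sum_congr rfl
        intro i _
        beta_reduce
        split_ifs
        · exact h1.symm
        · exact h0.symm
    · rintro e ⟨ρ, _, hs, rfl⟩
      rw [← hs]
      apply Finset.sum_le_sum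
      intro i _
      rw [← Nat.lt_succ_iff, Nat.div_lt_iff_lt_mul (by omega)]
      simp only [Nat.succ_eq_add_one]
      nlinarith [Nat.sub_le (ρ i + k) 1, Nat.sub_add_cancel (show 1 ≤ ρ i + k by omega),
        Nat.mul_le_mul_left (ρ i) (show 1 ≤ k by omega)]
  · intro hmd
    constructor
    · obtain ⟨n, rfl⟩ : ∃ n, m = n + 1 := ⟨m - 1, by omega⟩
      refine ⟨Fin.cons (1 + (d - (n + 1))) (fun _ => 1), ?_, ?_, ?_⟩
      · intro i j hij
        induction i using Fin.cases with
        | zero => induction j using Fin.cases <;> simp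
        | succ i =>
          induction j using Fin.cases with
          | zero => simp at hij
          | succ j => simp
      · simp [Fin.sum_univ_succ]; omega
      · simp only [Fin.sum_univ_succ, Fin.cons_zero, Fin.cons_succ, h1]
        have : 1 + (d - (n + 1)) + k - 1 = (d - (n + 1)) + k := by omega
        rw [this, Nat.add_div_right _ (by omega)]
        simp; omega
    · rintro e ⟨ρ, _, hs, rfl⟩
      have key : (∑ i, (ρ i + k - 1) / k) * k ≤ d + m * (k - 1) := by
        rw [Finset.sum_mul, ← hs]
        calc _ ≤ ∑ i : Fin m, (ρ i + (k - 1)) := by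
              apply Finset.sum_le_sum
              intro i _
              have := Nat.div_mul_le_self (ρ i + k - 1) k
              omega
          _ = _ := by simp [Finset.sum_add_distrib]
      have h2 : d + m * (k - 1) = (d - m) + k * m := by
        obtain ⟨j, rfl⟩ : ∃ j, k = j + 1 := ⟨k - 1, by omega⟩
        obtain ⟨q, rfl⟩ := Nat.exists_eq_add_of_le hmd
        simp; ring
      rw [h2] at key
      have := (Nat.le_div_iff_mul_le (by omega : 0 < k)).2 key
      rw [Nat.add_mul_div_left _ _ (by omega)] at this
      omega
end

section
/- Let m ≥ 3 be odd. Then the number of even Latin squares of order m equals the number of odd Latin squares of order m. -/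
open scoped BigOperators

/-- `L` is a Latin square of order `m`: every row and every column of `L` is a
bijection of `{1,…,m}`. -/
def IsLatinSquare {m : ℕ} (L : Fin m → Fin m → Fin m) : Prop :=
  (∀ i, Function.Bijective fun j => L i j) ∧ (∀ j, Function.Bijective fun i => L i j)

/-- The sign of a Latin square: the product over all columns `j` of the sign of the
permutation `i ↦ L i j`. -/
noncomputable def latinSign {m : ℕ} (L : Fin m → Fin m → Fin m) (h : IsLatinSquare L) :
    ℤˣ :=
  ∏ j : Fin m, Equiv.Perm.sign (Equiv.ofBijective (fun i => L i j) (h.2 j))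

theorem latin_comp {m : ℕ} (σ : Equiv.Perm (Fin m)) {L : Fin m → Fin m → Fin m}
    (h : IsLatinSquare L) : IsLatinSquare (fun i j => σ (L i j)) :=
  ⟨fun i => σ.bijective.comp (h.1 i), fun j => σ.bijective.comp (h.2 j)⟩

theorem latinSign_comp {m : ℕ} (hmodd : Odd m) (σ : Equiv.Perm (Fin m))
    (hσ : Equiv.Perm.sign σ = -1) {L : Fin m → Fin m → Fin m}
    (h : IsLatinSquare L) (h' : IsLatinSquare (fun i j => σ (L i j))) :
    latinSign (fun i j => σ (L i j)) h' = - latinSign L h := by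
  unfold latinSign
  have key : ∀ j : Fin m,
      Equiv.Perm.sign (Equiv.ofBijective (fun i => σ (L i j)) (h'.2 j))
        = (-1) * Equiv.Perm.sign (Equiv.ofBijective (fun i => L i j) (h.2 j)) := by
    intro j
    rw [← hσ, ← Equiv.Perm.sign_mul]
    congr 1
    ext i
    simp
  rw [Finset.prod_congr rfl (fun j _ => key j), Finset.prod_mul_distrib]
  simp [hmodd.neg_one_pow]

/-- For odd `m ≥ 3`, the number of even Latin squares of order `m` equals the number of
odd Latin squares of order `m`. -/
theorem even_eq_odd_latin_squares (m : ℕ) (hm : 3 ≤ m) (hmodd : Odd m) :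
    Nat.card {L : Fin m → Fin m → Fin m // ∃ h : IsLatinSquare L, latinSign L h = 1}
      = Nat.card {L : Fin m → Fin m → Fin m // ∃ h : IsLatinSquare L, latinSign L h = -1} := by
  have hσ : Equiv.Perm.sign (Equiv.swap (⟨0, by omega⟩ : Fin m) ⟨1, by omega⟩) = -1 :=
    Equiv.Perm.sign_swap (by simp)
  generalize hs : Equiv.swap (⟨0, by omega⟩ : Fin m) ⟨1, by omega⟩ = σ at hσ
  have hinv : ∀ x, σ (σ x) = x := by
    intro x
    rw [← hs]
    exact Equiv.swap_apply_self _ _ _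
  refine Nat.card_congr
    { toFun := fun L => ⟨fun i j => σ (L.1 i j), ?_⟩
      invFun := fun L => ⟨fun i j => σ (L.1 i j), ?_⟩
      left_inv := ?_
      right_inv := ?_ }
  · obtain ⟨L, h, hL⟩ := L
    exact ⟨latin_comp σ h, by rw [latinSign_comp hmodd σ hσ h, hL]⟩
  · obtain ⟨L, h, hL⟩ := L
    exact ⟨latin_comp σ h, by rw [latinSign_comp hmodd σ hσ h, hL, neg_neg]⟩
  · intro L
    apply Subtype.ext
    funext i j
    exact hinv _
  · intro L
    apply Subtype.ext
    funext i j
    exact hinv _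
end

section
/- Let m ≥ 1, n ≥ 1, let λ be a partition with at most m rows, and let μ = λ^t be its transpose (so μ_c is the length of column c of λ). Let T be a tableau of shape λ with entries in {1,…,n} that is regular and duplex. For a real m×n matrix A, define f_T(A) := Σ_φ ∏_{c=1}^{λ_1} det(M_{φ,c}), where the sum is over all maps φ : {1,…,n} → {1,…,n}, and M_{φ,c} is the μ_c × μ_c real matrix whose entry in row r and column s is A_{r, φ(T(s,c))} (with T(s,c) the entry of T in row s of column c). Then f_T(A) ≥ 0 for every real m×n matrix A, and there exists a real m×n matrix A with f_T(A) > 0; in particular f_T is not identically zero. -/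
open scoped BigOperators

/-- The function `f_T` associated to a tableau `T` given column-wise (column `c` has the
`μ c` entries `T c 0, …, T c (μ c - 1)`, all from `{1,…,n}`):
`f_T(A) = Σ_φ Π_c det(M_{φ,c})`, where the sum is over all maps
`φ : {1,…,n} → {1,…,n}` and `M_{φ,c}` is the `μ_c × μ_c` matrix whose `(r,s)` entry is
`A_{r, φ(T(s,c))}`. -/
noncomputable def fTab (m n w : ℕ) (μ : Fin w → ℕ) (hle : ∀ c, μ c ≤ m)
    (T : (c : Fin w) → Fin (μ c) → Fin n) (A : Matrix (Fin m) (Fin n) ℝ) : ℝ :=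
  ∑ φ : Fin n → Fin n, ∏ c : Fin w,
    (Matrix.of fun r s : Fin (μ c) => A (Fin.castLE (hle c) r) (φ (T c s))).det

/-- If `T` is a regular and duplex tableau of a shape `λ` with at most `m` rows
(given column-wise via the transpose shape `μ = λᵗ`, `μ c` being the length of column
`c`), then `f_T(A) ≥ 0` for every real `m × n` matrix `A`, and `f_T(A) > 0` for some
`A`; in particular `f_T` is not identically zero. -/
theorem fTab_nonneg_and_pos (m n w : ℕ) (hm : 1 ≤ m) (hn : 1 ≤ n)
    (μ : Fin w → ℕ) (hmono : ∀ c c' : Fin w, c ≤ c' → μ c' ≤ μ c)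
    (hpos : ∀ c, 1 ≤ μ c) (hle : ∀ c, μ c ≤ m)
    (T : (c : Fin w) → Fin (μ c) → Fin n)
    (hreg : ∀ c, Function.Injective (T c))
    (hdup : ∀ c : Fin w, Even ((Finset.univ.filter (fun c' : Fin w =>
        (⟨μ c', T c'⟩ : Σ k : ℕ, (Fin k → Fin n)) = ⟨μ c, T c⟩)).card)) :
    (∀ A : Matrix (Fin m) (Fin n) ℝ, 0 ≤ fTab m n w μ hle T A) ∧
    (∃ A : Matrix (Fin m) (Fin n) ℝ, 0 < fTab m n w μ hle T A) := by
  classical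
  have key : ∀ (A : Matrix (Fin m) (Fin n) ℝ) (φ : Fin n → Fin n),
      0 ≤ ∏ c : Fin w,
        (Matrix.of fun r s : Fin (μ c) => A (Fin.castLE (hle c) r) (φ (T c s))).det := by
    intro A φ
    let g : (Σ k : ℕ, (Fin k → Fin n)) → ℝ := fun x =>
      if h : x.1 ≤ m then
        (Matrix.of fun r s : Fin x.1 => A (Fin.castLE h r) (φ (x.2 s))).det else 0
    let K : Fin w → (Σ k : ℕ, (Fin k → Fin n)) := fun c => ⟨μ c, T c⟩
    have h1 : ∏ c : Fin w,
        (Matrix.of fun r s : Fin (μ c) => A (Fin.castLE (hle c) r) (φ (T c s))).det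
        = ∏ c : Fin w, g (K c) := by
      refine Finset.prod_congr rfl fun c _ => ?_
      simp only [g, K]
      rw [dif_pos (hle c)]
    rw [h1, Finset.prod_comp g K]
    refine Finset.prod_nonneg fun x hx => ?_
    obtain ⟨c, -, rfl⟩ := Finset.mem_image.mp hx
    refine Even.pow_nonneg ?_ _
    convert hdup c
  refine ⟨fun A => Finset.sum_nonneg fun φ _ => key A φ, ?_⟩
  refine ⟨Matrix.of fun r j => ((j : ℕ) : ℝ) ^ (r : ℕ), ?_⟩
  refine Finset.sum_pos' (fun φ _ => key _ φ) ⟨id, Finset.mem_univ _, ?_⟩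
  refine lt_of_le_of_ne (key _ id) (Ne.symm ?_)
  refine Finset.prod_ne_zero_iff.mpr fun c _ => ?_
  have h2 : (Matrix.of fun r s : Fin (μ c) =>
      (Matrix.of fun (r : Fin m) (j : Fin n) => ((j : ℕ) : ℝ) ^ (r : ℕ))
        (Fin.castLE (hle c) r) (id (T c s)))
      = (Matrix.vandermonde fun s => ((T c s : ℕ) : ℝ)).transpose := by
    ext r s
    simp [Matrix.vandermonde]
  rw [h2, Matrix.det_transpose, Matrix.det_vandermonde_ne_zero_iff]
  intro a b hab
  exact hreg c (Fin.ext (Nat.cast_injective hab))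
end

section
/- Let m ≥ 1, e ≥ 1, δ ≥ 1, let λ be a partition with at most m rows, let T be a tableau of shape (m × e) + λ with entries in {1,…,δ}, and let S be a tableau of shape λ with entries in {1,…,m}. For a map φ : {1,…,δ} → {1,…,m}, write ψ(φ) := rightpart(φ(T)). Assume: (i) for every φ such that φ(T) is regular, ψ(φ) lies in the S_m-orbit of S; and (ii) there exists φ such that φ(T) is regular and ψ(φ) = S. Then there exists an integer α ≥ 1 such that for every tableau Ŝ in the S_m-orbit of S, the number of maps φ : {1,…,δ} → {1,…,m} with φ(T) regular and ψ(φ) = Ŝ equals α. -/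
open scoped BigOperators

theorem tabCol_map_aux {m : ℕ} {A B : Type*} (f : A → B) (lam : Fin m → ℕ)
    (T : (r : Fin m) → Fin (lam r) → A) (c : ℕ) :
    tabCol lam (fun r c => f (T r c)) c = (tabCol lam T c).map f := by
  unfold tabCol
  rw [List.map_filterMap]
  congr 1
  funext r
  split_ifs <;> rfl

theorem tabRegular_map_aux {m : ℕ} {A B : Type*} (f : A → B) (hf : Function.Injective f)
    (lam : Fin m → ℕ) (T : (r : Fin m) → Fin (lam r) → A) :
    TabRegular lam (fun r c => f (T r c)) ↔ TabRegular lam T := by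
  unfold TabRegular
  refine forall_congr' fun c => ?_
  rw [tabCol_map_aux, List.nodup_map_iff hf]

/-- Claim (∗) of the paper: if every regular specialization `φ(T)` has its right part in
the `S_m`-orbit of `S`, and some regular specialization has right part exactly `S`, then
every tableau in the `S_m`-orbit of `S` has the same (positive) number `α` of preimages
`φ` with `φ(T)` regular under `φ ↦ rightpart(φ(T))`. -/
theorem equal_fibers_of_orbit (m e δ : ℕ) (hm : 1 ≤ m) (he : 1 ≤ e) (hδ : 1 ≤ δ)
    (lam : Fin m → ℕ) (hlam : ∀ i j : Fin m, i ≤ j → lam j ≤ lam i)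
    (T : (r : Fin m) → Fin (e + lam r) → Fin δ)
    (S : (r : Fin m) → Fin (lam r) → Fin m)
    (h1 : ∀ φ : Fin δ → Fin m,
        TabRegular (fun r => e + lam r) (fun r c => φ (T r c)) →
        ∃ π : Equiv.Perm (Fin m),
          tabRight lam e (fun r c => φ (T r c)) = fun r c => π (S r c))
    (h2 : ∃ φ : Fin δ → Fin m,
        TabRegular (fun r => e + lam r) (fun r c => φ (T r c)) ∧
        tabRight lam e (fun r c => φ (T r c)) = S) :
    ∃ α : ℕ, 1 ≤ α ∧
      ∀ Shat : (r : Fin m) → Fin (lam r) → Fin m,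
        (∃ π : Equiv.Perm (Fin m), Shat = fun r c => π (S r c)) →
        Nat.card {φ : Fin δ → Fin m //
          TabRegular (fun r => e + lam r) (fun r c => φ (T r c)) ∧
          tabRight lam e (fun r c => φ (T r c)) = Shat} = α := by
  obtain ⟨φ₀, hr, hS⟩ := h2
  refine ⟨Nat.card {φ : Fin δ → Fin m //
          TabRegular (fun r => e + lam r) (fun r c => φ (T r c)) ∧
          tabRight lam e (fun r c => φ (T r c)) = S}, ?_, ?_⟩
  · haveI : Nonempty {φ : Fin δ → Fin m //
          TabRegular (fun r => e + lam r) (fun r c => φ (T r c)) ∧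
          tabRight lam e (fun r c => φ (T r c)) = S} := ⟨⟨φ₀, hr, hS⟩⟩
    exact Nat.card_pos
  · rintro Shat ⟨π, rfl⟩
    symm
    refine Nat.card_congr (Equiv.subtypeEquiv (Equiv.arrowCongr (Equiv.refl _) π) ?_)
    intro φ
    refine and_congr ?_ ?_
    · exact (tabRegular_map_aux π π.injective (fun r => e + lam r)
        (fun r c => φ (T r c))).symm
    · constructor
      · intro h
        subst h
        rfl
      · intro h
        funext r c
        exact π.injective (congrFun (congrFun h r) c)
end
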